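/- Let k ≥ 100 be an integer and let G be a graph with density d = d(G) ≥ k². Then G contains at least one of the following: (i) a subgraph H with v(H) ≤ 12k³d and d(H) ≥ d/(24k⁵), or (ii) an m-bounded minor G' with d(G') ≥ m·(1 − 30/m)·d for some integer m with k/6 ≤ m ≤ k. -/

import Mathlib

open SimpleGraph

/-- Density of a graph: `e(G) / v(G)`. -/
noncomputable def SimpleGraph.density {V : Type*} (G : SimpleGraph V) : ℝ :=
  (Nat.card G.edgeSet : ℝ) / (Nat.card V : ℝ)

/-- Density of a subgraph: its number of edges divided by its number of vertices. -/
noncomputable def SimpleGraph.Subgraph.density {V : Type*} {G : SimpleGraph V}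
    (H : G.Subgraph) : ℝ :=
  (Nat.card H.edgeSet : ℝ) / (Nat.card H.verts : ℝ)

/-- A model of `H` in `G`: pairwise disjoint branch sets, each inducing a connected
subgraph of `G`, with an edge of `G` between branch sets of adjacent vertices of `H`. -/
def SimpleGraph.IsMinorModel {V : Type*} {W : Type*} (G : SimpleGraph V) (H : SimpleGraph W)
    (X : W → Set V) : Prop :=
  (Pairwise fun i j => Disjoint (X i) (X j)) ∧
  (∀ i, (G.induce (X i)).Connected) ∧
  (∀ i j, H.Adj i j → ∃ u ∈ X i, ∃ v ∈ X j, G.Adj u v)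

/-- `G` has a `k`-bounded `H` minor if `G` contains a model of `H` all of whose branch sets
have at most `k` vertices. -/
def SimpleGraph.HasBoundedMinor {V : Type*} {W : Type*} (k : ℕ) (G : SimpleGraph V)
    (H : SimpleGraph W) : Prop :=
  ∃ X : W → Set V, G.IsMinorModel H X ∧ ∀ i, Nat.card (X i) ≤ k

/-!
If no small subgraph is dense, then contracting `k` vertices onto a centre, one neighbour at a time,
is cheap: a set of `⌈d / k⌉` candidates spans few edges with the second neighbourhood of the star
built so far, so by averaging some candidate shares few neighbours with it, and a whole star costs
less than `6d` edges.

Pass to an induced subgraph of density at least `d` that is minimal with this property, and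
contract a family of disjoint clumps of `k` vertices, close to stars, that maximises the number of
remaining edges plus a reward for each clump and for each covered vertex of large degree. By
maximality no star can be added, one clump cannot be replaced by two, and no vertex can be swapped
for one of larger degree. Hence the uncovered vertices of small degree, the residual ones, span few
edges, almost every clump has at most one vertex with many residual neighbours, and up to `O(1 / k)`
times the number of clumps every uncovered vertex is residual. After deletion of the residual
vertices about one vertex is left per clump. By minimality these `k` original vertices per clump met
about `dk` edges, of which only `O(d)` are lost.
-/

universe u

namespace BoundedMinor

open Finset
open scoped Classical

noncomputable section

section Graph

variable {V W : Type*}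

/-- The number of neighbours of `v` in the vertex set `U`. -/
def degIn (G : SimpleGraph V) (v : V) (U : Finset V) : ℕ := #{u ∈ U | G.Adj v u}

variable (G : SimpleGraph V)

theorem degIn_mono (v : V) {U U' : Finset V} (h : U ⊆ U') : degIn G v U ≤ degIn G v U' :=
  card_le_card (filter_subset_filter _ h)

theorem degIn_le_card (v : V) (U : Finset V) : degIn G v U ≤ #U := card_filter_le _ _

theorem degIn_union_le (v : V) (U U' : Finset V) :
    degIn G v (U ∪ U') ≤ degIn G v U + degIn G v U' := by
  simpa only [degIn, filter_union] using card_union_le _ _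

theorem degIn_union_of_disjoint (v : V) {U U' : Finset V} (h : Disjoint U U') :
    degIn G v (U ∪ U') = degIn G v U + degIn G v U' := by
  rw [degIn, filter_union, card_union_of_disjoint (disjoint_filter_filter h), degIn, degIn]

theorem card_interedges_eq_sum_degIn (U U' : Finset V) :
    #(G.interedges U U') = ∑ u ∈ U, degIn G u U' := by
  rw [SimpleGraph.interedges, Rel.interedges, card_filter, sum_product]
  simp only [degIn, card_filter]

theorem card_interedges_map_embedding {H : SimpleGraph W} (f : H ↪g G) (U U' : Finset W) :
    #(G.interedges (U.map f.toEmbedding) (U'.map f.toEmbedding)) = #(H.interedges U U') := by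
  simp [card_interedges_eq_sum_degIn, sum_map, degIn, filter_map, card_map]

theorem card_interedges_comm (U U' : Finset V) :
    #(G.interedges U U') = #(G.interedges U' U) :=
  have := G.symm
  Rel.card_interedges_comm U U'

theorem card_interedges_union_left {U U' : Finset V} (T : Finset V) (h : Disjoint U U') :
    #(G.interedges (U ∪ U') T) = #(G.interedges U T) + #(G.interedges U' T) := by
  simp only [card_interedges_eq_sum_degIn, sum_union h]

theorem card_interedges_union_self {U U' : Finset V} (h : Disjoint U U') :
    #(G.interedges (U ∪ U') (U ∪ U')) =
      #(G.interedges U U) + 2 * #(G.interedges U U') + #(G.interedges U' U') := by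
  rw [card_interedges_union_left G _ h, card_interedges_comm G U, card_interedges_comm G U',
    card_interedges_union_left G _ h, card_interedges_union_left G _ h,
    card_interedges_comm G U' U]
  ring

theorem degIn_erase_self (v : V) (U : Finset V) : degIn G v (U.erase v) = degIn G v U := by
  rw [degIn, degIn, filter_erase, erase_eq_of_notMem (by simp)]

theorem card_interedges_eq_erase_add {U : Finset V} {v : V} (hv : v ∈ U) :
    #(G.interedges U U) = #(G.interedges (U.erase v) (U.erase v)) + 2 * degIn G v U := by
  have hsplit := card_interedges_union_self G (disjoint_singleton_left.2 (notMem_erase v U))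
  have hvv : degIn G v {v} = 0 := by simp [degIn, filter_singleton]
  rw [← insert_eq, insert_erase hv, card_interedges_eq_sum_degIn G {v},
    card_interedges_eq_sum_degIn G {v}, sum_singleton, sum_singleton, hvv,
    degIn_erase_self] at hsplit
  omega

theorem mul_card_le_of_le_degIn {s t : ℝ} {U T : Finset V}
    (hs : #(G.interedges (U ∪ T) (U ∪ T)) ≤ s * #(U ∪ T))
    (ht : ∀ u ∈ U, t ≤ degIn G u T) : t * #U ≤ s * #(U ∪ T) :=
  calc t * #U = ∑ _u ∈ U, t := by rw [sum_const, nsmul_eq_mul, mul_comm]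
    _ ≤ ∑ u ∈ U, (degIn G u T : ℝ) := sum_le_sum ht
    _ = #(G.interedges U T) := by rw [card_interedges_eq_sum_degIn, Nat.cast_sum]
    _ ≤ #(G.interedges (U ∪ T) (U ∪ T)) := by
      exact_mod_cast card_le_card
        (G.interedges_mono subset_union_left subset_union_right)
    _ ≤ s * #(U ∪ T) := hs

theorem ncard_edgeSet_map_le_of_factorsThrough {X : Type*} [Finite X] [Nonempty W]
    {f : V → W} {g : V → X} (h : f.FactorsThrough g) :
    (G.map f).edgeSet.ncard ≤ (G.map g).edgeSet.ncard := by
  obtain ⟨w⟩ := ‹Nonempty W›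
  refine (Set.ncard_le_ncard ?_ (Set.toFinite _)).trans (Set.ncard_image_le
    (f := Sym2.map (Function.extend g f fun _ ↦ w)))
  rintro ⟨_, _⟩ he
  obtain ⟨hne, u, v, huv, rfl, rfl⟩ := (SimpleGraph.map_adj' ..).1 he
  exact ⟨s(g u, g v), SimpleGraph.map_adj_apply' huv fun hg ↦ hne (h hg),
    by simp [h.extend_apply]⟩

theorem ncard_edgeSet_map_add_le [Finite V] (f : V → W) (U : Set V) :
    (G.map f).edgeSet.ncard + (G.induce U).edgeSet.ncard ≤
      ((G.map f).induce (f '' U)).edgeSet.ncard + G.edgeSet.ncard := by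
  set E := Sym2.map Subtype.val '' (G.induce U).edgeSet
  have hE : E ⊆ G.edgeSet := by
    rintro _ ⟨⟨u, v⟩, huv, rfl⟩
    exact huv
  have hEcard : E.ncard = (G.induce U).edgeSet.ncard :=
    Set.ncard_image_of_injective _ (Sym2.map.injective Subtype.val_injective)
  have hsub : (G.map f).edgeSet ⊆
      Sym2.map Subtype.val '' ((G.map f).induce (f '' U)).edgeSet ∪
        Sym2.map f '' (G.edgeSet \ E) := by
    rintro ⟨_, _⟩ h
    obtain ⟨-, u, v, huv, rfl, rfl⟩ := (SimpleGraph.map_adj' ..).1 h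
    by_cases hU : u ∈ U ∧ v ∈ U
    · exact .inl ⟨s(⟨f u, u, hU.1, rfl⟩, ⟨f v, v, hU.2, rfl⟩), h, rfl⟩
    · refine .inr ⟨s(u, v), ⟨huv, ?_⟩, rfl⟩
      rintro ⟨⟨x, y⟩, -, hxy⟩
      obtain ⟨rfl, rfl⟩ | ⟨rfl, rfl⟩ := Sym2.eq_iff.1 hxy
      · exact hU ⟨x.2, y.2⟩
      · exact hU ⟨y.2, x.2⟩
  have hfin : (f '' U).Finite := Set.toFinite _
  have := hfin.to_subtype
  have hcard := (Set.ncard_le_ncard hsub).trans ((Set.ncard_union_le _ _).trans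
    (Nat.add_le_add Set.ncard_image_le Set.ncard_image_le))
  have := Set.ncard_sdiff_add_ncard_of_subset hE
  omega

theorem two_mul_ncard_edgeSet [Fintype V] : 2 * G.edgeSet.ncard = #(G.interedges univ univ) := by
  rw [← SimpleGraph.coe_edgeFinset, Set.ncard_coe_finset, SimpleGraph.two_mul_card_edgeFinset,
    SimpleGraph.interedges, Rel.interedges, univ_product_univ]

theorem two_mul_ncard_edgeSet_induce (S : Finset V) :
    2 * (G.induce (S : Set V)).edgeSet.ncard = #(G.interedges S S) := by
  rw [two_mul_ncard_edgeSet, ← card_interedges_map_embedding G (Embedding.induce (S : Set V))]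
  congr 2 <;> ext <;> simp

/-- Redirecting the edges at `l` to `c` loses the edge `lc`, and one of the edges `lv`, `cv` for
each common neighbour `v`. -/
theorem ncard_edgeSet_le_map_update [Finite V] [DecidableEq V] (l c : V) :
    G.edgeSet.ncard ≤
      (G.map (Function.update id l c)).edgeSet.ncard + (G.commonNeighbors l c).ncard + 1 := by
  have := Fintype.ofFinite V
  set H := G.map (Function.update id l c)
  have hkept : (G.deleteIncidenceSet l).edgeSet ⊆ H.edgeSet := by
    rintro ⟨u, v⟩ h
    obtain ⟨huv, hu, hv⟩ := G.deleteIncidenceSet_adj.1 h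
    exact (SimpleGraph.map_adj' ..).2 ⟨huv.ne, u, v, huv, by simp [hu], by simp [hv]⟩
  set N := G.neighborSet l \ insert c (G.commonNeighbors l c)
  have hmoved : (fun v ↦ s(c, v)) '' N ⊆ H.edgeSet := by
    rintro _ ⟨v, ⟨hlv, hv⟩, rfl⟩
    rw [Set.mem_insert_iff, not_or] at hv
    exact (SimpleGraph.map_adj' ..).2
      ⟨Ne.symm hv.1, l, v, hlv, by simp, by simp [(show G.Adj l v from hlv).ne']⟩
  have hdisj : Disjoint (G.deleteIncidenceSet l).edgeSet ((fun v ↦ s(c, v)) '' N) := by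
    rw [Set.disjoint_right]
    rintro _ ⟨v, ⟨hlv, hv⟩, rfl⟩ h
    exact hv (.inr ⟨hlv, (G.deleteIncidenceSet_adj.1 h).1⟩)
  have hH := Set.ncard_le_ncard (Set.union_subset hkept hmoved)
  rw [Set.ncard_union_eq hdisj, Set.ncard_image_of_injective _ fun u v ↦ Sym2.congr_right.1] at hH
  have hN : G.degree l ≤ N.ncard + ((G.commonNeighbors l c).ncard + 1) := by
    rw [← SimpleGraph.card_neighborSet_eq_degree, ← Nat.card_eq_fintype_card]
    exact (Set.ncard_le_ncard_sdiff_add_ncard _ _).trans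
      (Nat.add_le_add_left (Set.ncard_insert_le _ _) _)
  have hG := G.card_edgeFinset_deleteIncidenceSet l
  rw [← Set.ncard_coe_finset, ← Set.ncard_coe_finset, SimpleGraph.coe_edgeFinset,
    SimpleGraph.coe_edgeFinset] at hG
  omega

end Graph

section Packing

variable {V : Type*} [Fintype V] {𝓐 𝓑 : Finset (Finset V)} {S T : Finset V} {u v : V}

/-- The block of the family `𝓐` of disjoint sets that contains `v`, or `{v}` if there is none. The
graph obtained by contracting every block of `𝓐` is encoded as `G.map (cell 𝓐)`. -/
def cell (𝓐 : Finset (Finset V)) (v : V) : Finset V := {u | u = v ∨ ∃ S ∈ 𝓐, u ∈ S ∧ v ∈ S}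

/-- The vertices lying in some block of `𝓐`. -/
def covered (𝓐 : Finset (Finset V)) : Finset V := 𝓐.biUnion id

/-- The union of the cells that meet `U`. -/
def saturate (𝓐 : Finset (Finset V)) (U : Finset V) : Finset V := U.biUnion (cell 𝓐)

theorem mem_cell : u ∈ cell 𝓐 v ↔ u = v ∨ ∃ S ∈ 𝓐, u ∈ S ∧ v ∈ S := by simp [cell]

theorem mem_cell_self (𝓐 : Finset (Finset V)) (v : V) : v ∈ cell 𝓐 v := mem_cell.2 (.inl rfl)

omit [Fintype V] in
theorem mem_covered : v ∈ covered 𝓐 ↔ ∃ S ∈ 𝓐, v ∈ S := by simp [covered]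

omit [Fintype V] in
theorem subset_covered (hS : S ∈ 𝓐) : S ⊆ covered 𝓐 := fun _ h ↦ mem_covered.2 ⟨S, hS, h⟩

omit [Fintype V] in
theorem covered_insert : covered (insert S 𝓐) = S ∪ covered 𝓐 := by
  rw [covered, biUnion_insert, id_eq, covered]

theorem cell_of_notMem_covered (hv : v ∉ covered 𝓐) : cell 𝓐 v = {v} := by
  ext u
  rw [mem_cell, mem_singleton, or_iff_left]
  rintro ⟨S, hS, -, hvS⟩
  exact hv (subset_covered hS hvS)

theorem cell_of_mem (h : (𝓐 : Set (Finset V)).PairwiseDisjoint id) (hS : S ∈ 𝓐) (hv : v ∈ S) :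
    cell 𝓐 v = S := by
  ext u
  rw [mem_cell]
  constructor
  · rintro (rfl | ⟨T, hT, huT, hvT⟩)
    · exact hv
    · rwa [h.elim_finset hS hT v hv hvT]
  · exact fun hu ↦ .inr ⟨S, hS, hu, hv⟩

theorem cell_eq_of_mem_cell (h : (𝓐 : Set (Finset V)).PairwiseDisjoint id) (hu : u ∈ cell 𝓐 v) :
    cell 𝓐 u = cell 𝓐 v := by
  obtain rfl | ⟨S, hS, huS, hvS⟩ := mem_cell.1 hu
  · rfl
  · rw [cell_of_mem h hS huS, cell_of_mem h hS hvS]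

theorem ncard_edgeSet_map_cell_le (G : SimpleGraph V)
    (h : (𝓐 : Set (Finset V)).PairwiseDisjoint id)
    (hle : ∀ T ∈ 𝓑, ∀ u ∈ T, ∀ v ∈ T, u ∈ cell 𝓐 v) :
    (G.map (cell 𝓐)).edgeSet.ncard ≤ (G.map (cell 𝓑)).edgeSet.ncard := by
  refine ncard_edgeSet_map_le_of_factorsThrough G fun u v huv ↦ cell_eq_of_mem_cell h ?_
  obtain rfl | ⟨T, hT, hu, hv⟩ := mem_cell.1 (huv ▸ mem_cell_self 𝓑 u)
  · exact mem_cell_self 𝓐 u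
  · exact hle T hT u hu v hv

omit [Fintype V] in
theorem pairwiseDisjoint_insert_of_disjoint_covered
    (h : (𝓐 : Set (Finset V)).PairwiseDisjoint id) (hS : Disjoint S (covered 𝓐)) :
    ((insert S 𝓐 : Finset (Finset V)) : Set (Finset V)).PairwiseDisjoint id := by
  rw [coe_insert]
  exact h.insert fun T hT _ ↦ hS.mono_right (subset_covered hT)

theorem update_comp_cell_factorsThrough {l : V}
    (h : (𝓐 : Set (Finset V)).PairwiseDisjoint id) (hS : Disjoint S (covered 𝓐))
    (hl𝓐 : l ∉ covered 𝓐) (hlS : l ∉ S) :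
    (Function.update id {l} S ∘ cell (insert S 𝓐)).FactorsThrough
      (cell (insert (insert l S) 𝓐)) := by
  have hcell {T w} := cell_of_mem (S := T) (v := w)
    (pairwiseDisjoint_insert_of_disjoint_covered h hS)
  have hmem : ∀ w ∈ insert l S, Function.update id {l} S (cell (insert S 𝓐) w) = S := by
    intro w hw
    obtain rfl | hw := mem_insert.1 hw
    · have hw : w ∉ covered (insert S 𝓐) := by
        rw [covered_insert, mem_union]
        tauto
      rw [cell_of_notMem_covered hw, Function.update_self]
    · have hne : S ≠ {l} := by
        rintro rfl
        exact hlS (mem_singleton_self l)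
      rw [hcell (mem_insert_self S 𝓐) hw, Function.update_of_ne hne, id]
  intro u v huv
  obtain rfl | ⟨T, hT, hu, hv⟩ := mem_cell.1 (huv ▸ mem_cell_self (insert (insert l S) 𝓐) u)
  · rfl
  · obtain rfl | hT := mem_insert.1 hT
    · exact (hmem u hu).trans (hmem v hv).symm
    · have hT := mem_insert_of_mem (b := S) hT
      rw [Function.comp_apply, Function.comp_apply, hcell hT hu, hcell hT hv]

theorem commonNeighbors_map_cell_subset (G : SimpleGraph V) {l : V} {P : Finset V}
    (h : (𝓐 : Set (Finset V)).PairwiseDisjoint id) (hS : Disjoint S (covered 𝓐))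
    (hP : ∀ y ∈ S, ∀ u w, G.Adj l u → G.Adj y w → u ∈ cell 𝓐 w → u ∈ P ∨ w ∈ P) :
    (G.map (cell (insert S 𝓐))).commonNeighbors {l} S ⊆ cell (insert S 𝓐) '' P := by
  have hdisj := pairwiseDisjoint_insert_of_disjoint_covered h hS
  rintro Z ⟨hlZ, hSZ⟩
  obtain ⟨-, l', u, hu, hl', rfl⟩ := (SimpleGraph.map_adj' ..).1 hlZ
  obtain ⟨hSne, y, w, hw, hy, hwu⟩ := (SimpleGraph.map_adj' ..).1 hSZ
  obtain rfl : l' = l := mem_singleton.1 (hl' ▸ mem_cell_self (insert S 𝓐) l')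
  have hyS : y ∈ S := hy ▸ mem_cell_self (insert S 𝓐) y
  have huw : u ∈ cell 𝓐 w := by
    obtain rfl | ⟨T, hT, huT, hwT⟩ := mem_cell.1 (hwu ▸ mem_cell_self (insert S 𝓐) u)
    · exact mem_cell_self 𝓐 u
    · obtain rfl | hT := mem_insert.1 hT
      · exact absurd (cell_of_mem hdisj (mem_insert_self T 𝓐) huT).symm hSne
      · exact mem_cell.2 (.inr ⟨T, hT, huT, hwT⟩)
  obtain huP | hwP := hP y hyS u w hu hw huw
  · exact ⟨u, huP, rfl⟩
  · exact ⟨w, hwP, hwu⟩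

/-- The edges lost when `l` joins the block `S`: each common neighbour cell of `{l}` and `S` is
counted by a vertex of `P`. -/
theorem ncard_edgeSet_map_cell_le_insert (G : SimpleGraph V) {l : V} {P : Finset V}
    (h : (𝓐 : Set (Finset V)).PairwiseDisjoint id) (hS : Disjoint S (covered 𝓐))
    (hl𝓐 : l ∉ covered 𝓐) (hlS : l ∉ S)
    (hP : ∀ y ∈ S, ∀ u w, G.Adj l u → G.Adj y w → u ∈ cell 𝓐 w → u ∈ P ∨ w ∈ P) :
    (G.map (cell (insert S 𝓐))).edgeSet.ncard ≤
      (G.map (cell (insert (insert l S) 𝓐))).edgeSet.ncard + #P + 1 := by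
  have hcommon : ((G.map (cell (insert S 𝓐))).commonNeighbors {l} S).ncard ≤ #P :=
    calc _ ≤ (cell (insert S 𝓐) '' P).ncard :=
        Set.ncard_le_ncard (commonNeighbors_map_cell_subset G h hS hP)
      _ ≤ (P : Set V).ncard := Set.ncard_image_le
      _ = #P := Set.ncard_coe_finset P
  have hmerge := ncard_edgeSet_le_map_update (G.map (cell (insert S 𝓐))) {l} S
  rw [SimpleGraph.map_map] at hmerge
  have hfactor := ncard_edgeSet_map_le_of_factorsThrough G
    (update_comp_cell_factorsThrough h hS hl𝓐 hlS)
  omega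

end Packing

section Star

variable {V : Type*} [Fintype V] {G : SimpleGraph V} {k : ℕ} {d : ℝ}

/-- Every set of at most `12k³d` vertices induces a subgraph of density at most `d / (24k⁵)`. This
is the failure of the first alternative of the theorem. The factor `12` in place of `24` is due to
`interedges U U` containing every edge in both orders. -/
def IsLocallySparse (G : SimpleGraph V) (k : ℕ) (d : ℝ) : Prop :=
  ∀ U : Finset V, (#U : ℝ) ≤ 12 * k ^ 3 * d → #(G.interedges U U) ≤ #U * (d / (12 * k ^ 5))

omit [Fintype V] in
theorem IsLocallySparse.card_interedges_le (hG : IsLocallySparse G k d) {U T : Finset V}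
    (hUT : (#U : ℝ) + #T ≤ 12 * k ^ 3 * d) (hd : 0 ≤ d) :
    #(G.interedges U T) ≤ ((#U : ℝ) + #T) * (d / (12 * k ^ 5)) := by
  have hcard : (#(U ∪ T) : ℝ) ≤ #U + #T := mod_cast card_union_le U T
  calc (#(G.interedges U T) : ℝ) ≤ #(G.interedges (U ∪ T) (U ∪ T)) := by
        exact_mod_cast card_le_card (G.interedges_mono subset_union_left subset_union_right)
    _ ≤ #(U ∪ T) * (d / (12 * k ^ 5)) := hG _ (hcard.trans hUT)
    _ ≤ (#U + #T) * (d / (12 * k ^ 5)) := by gcongr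

omit [Fintype V] in
theorem IsLocallySparse.exists_mem_sum_degIn_le (hG : IsLocallySparse G k d) (hd : 0 ≤ d)
    {A S : Finset V} {Y : V → Finset V} (hA : A.Nonempty)
    (hAY : ∀ y ∈ S, (#A : ℝ) + #(Y y) ≤ 12 * k ^ 3 * d) :
    ∃ l ∈ A, #A * ∑ y ∈ S, (degIn G l (Y y) : ℝ) ≤
      (#S * #A + ∑ y ∈ S, (#(Y y) : ℝ)) * (d / (12 * k ^ 5)) := by
  simp_rw [mul_sum]
  suffices ∑ l ∈ A, ∑ y ∈ S, (degIn G l (Y y) : ℝ) ≤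
      (#S * #A + ∑ y ∈ S, (#(Y y) : ℝ)) * (d / (12 * k ^ 5)) by
    refine exists_le_of_sum_le hA ?_
    simp_rw [← mul_sum, sum_const, nsmul_eq_mul]
    linarith [mul_le_mul_of_nonneg_left this (#A).cast_nonneg]
  calc ∑ l ∈ A, ∑ y ∈ S, (degIn G l (Y y) : ℝ) = ∑ y ∈ S, (#(G.interedges A (Y y)) : ℝ) := by
        rw [sum_comm]
        simp_rw [card_interedges_eq_sum_degIn, Nat.cast_sum]
    _ ≤ ∑ y ∈ S, ((#A : ℝ) + #(Y y)) * (d / (12 * k ^ 5)) :=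
        sum_le_sum fun y hy ↦ hG.card_interedges_le (hAY y hy) hd
    _ = _ := by rw [← sum_mul, sum_add_distrib, sum_const, nsmul_eq_mul]

theorem ncard_edgeSet_map_cell_le_insert_add_degIn {𝓐 : Finset (Finset V)} {S : Finset V} {l : V}
    (h : (𝓐 : Set (Finset V)).PairwiseDisjoint id) (hS : Disjoint S (covered 𝓐))
    (hl𝓐 : l ∉ covered 𝓐) (hlS : l ∉ S) (J : Finset V) :
    (G.map (cell (insert S 𝓐))).edgeSet.ncard ≤
      (G.map (cell (insert (insert l S) 𝓐))).edgeSet.ncard +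
        (degIn G l J + ∑ y ∈ S, degIn G l (saturate 𝓐 (G.neighborFinset y) \ J)) + 1 := by
  set P : Finset V := {u ∈ J | G.Adj l u} ∪
    S.biUnion fun y ↦ {u ∈ saturate 𝓐 (G.neighborFinset y) \ J | G.Adj l u}
  have hP : #P ≤ degIn G l J + ∑ y ∈ S, degIn G l (saturate 𝓐 (G.neighborFinset y) \ J) :=
    (card_union_le _ _).trans (Nat.add_le_add_left card_biUnion_le _)
  refine (ncard_edgeSet_map_cell_le_insert G (P := P) h hS hl𝓐 hlS ?_).trans (by omega)
  intro y hy u w hlu hyw huw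
  have hu : u ∈ saturate 𝓐 (G.neighborFinset y) :=
    mem_biUnion.2 ⟨w, (G.mem_neighborFinset y w).2 hyw, huw⟩
  left
  by_cases huJ : u ∈ J
  · exact mem_union_left _ (mem_filter.2 ⟨huJ, hlu⟩)
  · exact mem_union_right _ (mem_biUnion.2 ⟨y, hy, mem_filter.2 ⟨mem_sdiff.2 ⟨hu, huJ⟩, hlu⟩⟩)

/-- A configuration in which `k - 1` neighbours of `x` in `L` can be contracted onto `x` cheaply:
few edges leave `L` into the exempted set `J`, and outside `J` the second neighbourhoods after
contraction of `𝓐` are small. -/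
structure IsStarSite (G : SimpleGraph V) (k : ℕ) (d : ℝ) (𝓐 : Finset (Finset V)) (x : V)
    (L J : Finset V) : Prop where
  pairwiseDisjoint : (𝓐 : Set (Finset V)).PairwiseDisjoint id
  center_notMem_covered : x ∉ covered 𝓐
  center_notMem_leaves : x ∉ L
  disjoint_leaves : Disjoint L (covered 𝓐)
  degIn_leaf_le : ∀ l ∈ L, (degIn G l J : ℝ) ≤ 4 * d / k
  card_saturate_leaf_le : ∀ l ∈ L, (#(saturate 𝓐 (G.neighborFinset l)) : ℝ) ≤ 12 * k ^ 2 * d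
  card_saturate_center_le :
    (#(saturate 𝓐 (G.neighborFinset x) \ J) : ℝ) ≤ 4 * k ^ 3 * d
  le_degIn_center : 2 * d / k + k ≤ degIn G x L

variable {𝓐 : Finset (Finset V)} {x : V} {L J F : Finset V}

theorem IsStarSite.sum_card_saturate_le (h : IsStarSite G k d 𝓐 x L J) (hFL : F ⊆ L)
    (hF : #F + 1 ≤ k) (hd : 0 ≤ d) :
    ∑ y ∈ insert x F, (#(saturate 𝓐 (G.neighborFinset y) \ J) : ℝ) ≤ 16 * k ^ 3 * d := by
  have hF' : (#F : ℝ) ≤ k := by exact_mod_cast (Nat.le_succ _).trans hF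
  rw [sum_insert fun hx ↦ h.center_notMem_leaves (hFL hx)]
  have hsum : ∑ y ∈ F, (#(saturate 𝓐 (G.neighborFinset y) \ J) : ℝ) ≤ #F * (12 * k ^ 2 * d) := by
    rw [← nsmul_eq_mul]
    refine sum_le_card_nsmul _ _ _ fun l hl ↦ ?_
    exact le_trans (mod_cast card_le_card sdiff_subset) (h.card_saturate_leaf_le l (hFL hl))
  calc _ ≤ 4 * k ^ 3 * d + k * (12 * k ^ 2 * d) := by
        gcongr
        · exact h.card_saturate_center_le
        · exact hsum.trans (by gcongr)
    _ = 16 * k ^ 3 * d := by ring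

theorem IsStarSite.card_saturate_sdiff_le (h : IsStarSite G k d 𝓐 x L J) (hk : 100 ≤ k)
    (hd : 0 ≤ d) {y : V} (hy : y ∈ insert x L) :
    (#(saturate 𝓐 (G.neighborFinset y) \ J) : ℝ) ≤ 4 * k ^ 3 * d := by
  obtain rfl | hy := mem_insert.1 hy
  · exact h.card_saturate_center_le
  · have hk' : (100 : ℝ) ≤ k := mod_cast hk
    calc (#(saturate 𝓐 (G.neighborFinset y) \ J) : ℝ) ≤ 12 * k ^ 2 * d :=
          le_trans (mod_cast card_le_card sdiff_subset) (h.card_saturate_leaf_le y hy)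
      _ ≤ 4 * k * k ^ 2 * d := by gcongr; linarith
      _ = 4 * k ^ 3 * d := by ring

theorem IsStarSite.exists_candidates (h : IsStarSite G k d 𝓐 x L J)
    (hd : (k : ℝ) ^ 2 ≤ d) (hF : #F + 1 ≤ k) :
    ∃ A ⊆ L \ F, (∀ l ∈ A, G.Adj x l) ∧ #A = ⌈d / k⌉₊ := by
  suffices ⌈d / k⌉₊ ≤ #{l ∈ L \ F | G.Adj x l} by
    obtain ⟨A, hA, hcard⟩ := exists_subset_card_eq this
    exact ⟨A, hA.trans (filter_subset _ _), fun l hl ↦ (mem_filter.1 (hA hl)).2, hcard⟩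
  have hdeg : degIn G x L ≤ degIn G x (L \ F) + #F :=
    calc degIn G x L ≤ degIn G x (L \ F ∪ F) :=
        degIn_mono G x (sdiff_union_self_eq_union (s := L) (t := F) ▸ subset_union_left)
      _ ≤ degIn G x (L \ F) + #F :=
        (degIn_union_le G x _ _).trans (Nat.add_le_add_left (degIn_le_card G x F) _)
  have hdeg : (degIn G x L : ℝ) ≤ degIn G x (L \ F) + #F := mod_cast hdeg
  have hF : (#F : ℝ) + 1 ≤ k := mod_cast hF
  have hx := h.le_degIn_center
  rw [mul_div_assoc] at hx
  have hdk : 0 ≤ d / k := div_nonneg ((sq_nonneg _).trans hd) k.cast_nonneg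
  exact Nat.ceil_le.2 (by linarith : d / k ≤ degIn G x (L \ F))

/-- Averaging over `⌈d / k⌉` candidates. -/
theorem IsStarSite.exists_candidate (h : IsStarSite G k d 𝓐 x L J) (hG : IsLocallySparse G k d)
    (hk : 100 ≤ k) (hd : (k : ℝ) ^ 2 ≤ d) (hFL : F ⊆ L) (hF : #F + 1 ≤ k) :
    ∃ l ∈ L \ F, G.Adj x l ∧
      ∑ y ∈ insert x F, (degIn G l (saturate 𝓐 (G.neighborFinset y) \ J) : ℝ) ≤
        1.5 * (d / k) := by
  have hk' : (100 : ℝ) ≤ k := mod_cast hk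
  have hd0 : 0 < d := by nlinarith
  obtain ⟨A, hAL, hadj, hcard⟩ := h.exists_candidates hd hF
  have hdA : d ≤ k * #A := by
    rw [hcard, ← div_le_iff₀' (by positivity)]
    exact Nat.le_ceil _
  have hAd : (#A : ℝ) ≤ d := by
    have : (#A : ℝ) < d / k + 1 := hcard ▸ Nat.ceil_lt_add_one (by positivity)
    have : d / k ≤ d / 100 := by gcongr
    nlinarith
  have hA : A.Nonempty := card_pos.1 (hcard ▸ Nat.ceil_pos.2 (by positivity))
  obtain ⟨l, hl, hsum⟩ := hG.exists_mem_sum_degIn_le hd0.le (S := insert x F)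
    (Y := fun y ↦ saturate 𝓐 (G.neighborFinset y) \ J) hA fun y hy ↦ by
      have := h.card_saturate_sdiff_le hk hd0.le (insert_subset_insert x hFL hy)
      have : d ≤ k ^ 3 * d := le_mul_of_one_le_left hd0.le (one_le_pow₀ (by linarith))
      linarith
  refine ⟨l, hAL hl, hadj l hl, le_of_mul_le_mul_left (hsum.trans ?_)
    (Nat.cast_pos.2 (card_pos.2 hA) : (0 : ℝ) < #A)⟩
  have hkF : (#(insert x F) : ℝ) ≤ k := mod_cast (card_insert_le x F).trans hF
  calc (#(insert x F) * #A +
        ∑ y ∈ insert x F, (#(saturate 𝓐 (G.neighborFinset y) \ J) : ℝ)) * (d / (12 * k ^ 5))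
      ≤ (k * #A + 16 * k ^ 3 * d) * (d / (12 * k ^ 5)) := by
        gcongr
        exact h.sum_card_saturate_le hFL hF hd0.le
    _ ≤ (k ^ 4 * #A + 16 * k ^ 3 * (k * #A)) * (d / (12 * k ^ 5)) := by
        gcongr
        exact le_self_pow₀ (by linarith) (by norm_num)
    _ = #A * (17 / 12 * (d / k)) := by field_simp; ring
    _ ≤ #A * (1.5 * (d / k)) := by gcongr; norm_num

theorem IsStarSite.exists_leaf (h : IsStarSite G k d 𝓐 x L J) (hG : IsLocallySparse G k d)
    (hk : 100 ≤ k) (hd : (k : ℝ) ^ 2 ≤ d) (hFL : F ⊆ L) (hF : #F + 1 ≤ k) :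
    ∃ l ∈ L \ F, G.Adj x l ∧ ((G.map (cell (insert (insert x F) 𝓐))).edgeSet.ncard : ℝ) ≤
      (G.map (cell (insert (insert x (insert l F)) 𝓐))).edgeSet.ncard + 5.6 * (d / k) := by
  obtain ⟨l, hl, hxl, hsum⟩ := h.exists_candidate hG hk hd hFL hF
  refine ⟨l, hl, hxl, ?_⟩
  obtain ⟨hlL, hlF⟩ := mem_sdiff.1 hl
  have hdisj : Disjoint (insert x F) (covered 𝓐) :=
    disjoint_insert_left.2 ⟨h.center_notMem_covered, h.disjoint_leaves.mono_left hFL⟩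
  have hlS : l ∉ insert x F := by
    rw [mem_insert, not_or]
    exact ⟨hxl.ne', hlF⟩
  have hloss := ncard_edgeSet_map_cell_le_insert_add_degIn (G := G) h.pairwiseDisjoint hdisj
    (disjoint_left.1 h.disjoint_leaves hlL) hlS J
  rw [insert_comm] at hloss
  have hJ := h.degIn_leaf_le l hlL
  have hdk : (100 : ℝ) ≤ d / k := by
    rw [le_div_iff₀ (by positivity)]
    have : (100 : ℝ) ≤ k := mod_cast hk
    nlinarith
  have hloss : ((G.map (cell (insert (insert x F) 𝓐))).edgeSet.ncard : ℝ) ≤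
      (G.map (cell (insert (insert x (insert l F)) 𝓐))).edgeSet.ncard + (degIn G l J +
        ∑ y ∈ insert x F, (degIn G l (saturate 𝓐 (G.neighborFinset y) \ J) : ℝ)) + 1 := by
    exact_mod_cast hloss
  rw [mul_div_assoc] at hJ
  linarith

theorem IsStarSite.exists_leaves (h : IsStarSite G k d 𝓐 x L J) (hG : IsLocallySparse G k d)
    (hk : 100 ≤ k) (hd : (k : ℝ) ^ 2 ≤ d) {n : ℕ} (hn : n + 1 ≤ k) :
    ∃ F ⊆ L, #F = n ∧ (∀ l ∈ F, G.Adj x l) ∧ ((G.map (cell 𝓐)).edgeSet.ncard : ℝ) ≤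
      (G.map (cell (insert (insert x F) 𝓐))).edgeSet.ncard + n * (5.6 * (d / k)) := by
  induction n with
  | zero =>
    refine ⟨∅, empty_subset L, card_empty, by simp, ?_⟩
    have := ncard_edgeSet_map_cell_le (𝓑 := insert {x} 𝓐) G h.pairwiseDisjoint ?_
    · simpa using this
    intro T hT u hu v hv
    obtain rfl | hT := mem_insert.1 hT
    · rw [mem_singleton.1 hu, mem_singleton.1 hv]
      exact mem_cell_self 𝓐 x
    · exact mem_cell.2 (.inr ⟨T, hT, hu, hv⟩)
  | succ n ih =>
    obtain ⟨F, hFL, hFn, hadj, hF⟩ := ih (by omega)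
    obtain ⟨l, hl, hxl, hloss⟩ := h.exists_leaf hG hk hd hFL (by omega)
    obtain ⟨hlL, hlF⟩ := mem_sdiff.1 hl
    refine ⟨insert l F, insert_subset hlL hFL, by rw [card_insert_of_notMem hlF, hFn],
      by simpa [hxl] using hadj, ?_⟩
    push_cast
    linarith

/-- The clumps that are contracted: every vertex is adjacent to the centre, except that the
vertices of `big` may be at distance two from it inside `S`. -/
def IsClump (G : SimpleGraph V) (big S : Finset V) : Prop :=
  ∃ c ∈ S, ∀ v ∈ S, v = c ∨ G.Adj c v ∨ v ∈ big ∧ ∃ w ∈ S, G.Adj c w ∧ G.Adj w v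

theorem IsStarSite.exists_clump (h : IsStarSite G k d 𝓐 x L J) (hG : IsLocallySparse G k d)
    (hk : 100 ≤ k) (hd : (k : ℝ) ^ 2 ≤ d) (big : Finset V) :
    ∃ S ⊆ insert x L, #S = k ∧ IsClump G big S ∧ ((G.map (cell 𝓐)).edgeSet.ncard : ℝ) ≤
      (G.map (cell (insert S 𝓐))).edgeSet.ncard + 5.6 * d := by
  obtain ⟨F, hFL, hFk, hadj, hloss⟩ := h.exists_leaves hG hk hd (n := k - 1) (by omega)
  refine ⟨insert x F, insert_subset_insert x hFL, ?_, ⟨x, mem_insert_self x F, ?_⟩, ?_⟩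
  · rw [card_insert_of_notMem fun hx ↦ h.center_notMem_leaves (hFL hx), hFk]
    omega
  · intro v hv
    obtain rfl | hv := mem_insert.1 hv
    · exact .inl rfl
    · exact .inr (.inl (hadj v hv))
  · have : (0 : ℝ) < k := mod_cast (by omega : 0 < k)
    have hkd : ((k - 1 : ℕ) : ℝ) * (5.6 * (d / k)) ≤ 5.6 * d := by
      calc ((k - 1 : ℕ) : ℝ) * (5.6 * (d / k)) ≤ k * (5.6 * (d / k)) := by
            have : 0 ≤ d := (by positivity : (0 : ℝ) ≤ (k : ℝ) ^ 2).trans hd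
            gcongr
            exact Nat.sub_le k 1
        _ = 5.6 * d := by field_simp
    linarith

end Star

section OptimalPacking

variable {V : Type*} [Fintype V] {G : SimpleGraph V} {k : ℕ} {d : ℝ}
  {big S : Finset V} {𝓐 𝓑 : Finset (Finset V)}

/-- A family of disjoint clumps, each with `k` vertices. -/
structure IsPacking (G : SimpleGraph V) (big : Finset V) (k : ℕ) (𝓐 : Finset (Finset V)) :
    Prop where
  pairwiseDisjoint : (𝓐 : Set (Finset V)).PairwiseDisjoint id
  isClump : ∀ S ∈ 𝓐, IsClump G big S
  card_eq : ∀ S ∈ 𝓐, #S = k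

omit [Fintype V] in
theorem IsPacking.subset (h : IsPacking G big k 𝓑) (h𝓐 : 𝓐 ⊆ 𝓑) : IsPacking G big k 𝓐 where
  pairwiseDisjoint := h.pairwiseDisjoint.subset (coe_subset.2 h𝓐)
  isClump S hS := h.isClump S (h𝓐 hS)
  card_eq S hS := h.card_eq S (h𝓐 hS)

omit [Fintype V] in
theorem IsPacking.insert (h : IsPacking G big k 𝓐) (hS : IsClump G big S) (hcard : #S = k)
    (hdisj : Disjoint S (covered 𝓐)) : IsPacking G big k (insert S 𝓐) where
  pairwiseDisjoint := pairwiseDisjoint_insert_of_disjoint_covered h.pairwiseDisjoint hdisj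
  isClump := forall_mem_insert _ _ _ |>.2 ⟨hS, h.isClump⟩
  card_eq := forall_mem_insert _ _ _ |>.2 ⟨hcard, h.card_eq⟩

omit [Fintype V] in
theorem IsClump.notMem_of_disjoint_covered (hS : IsClump G big S)
    (hdisj : Disjoint S (covered 𝓐)) : S ∉ 𝓐 := by
  obtain ⟨c, hc, -⟩ := hS
  exact fun h ↦ disjoint_left.1 hdisj hc (subset_covered h hc)

omit [Fintype V] in
theorem IsPacking.card_covered (h : IsPacking G big k 𝓐) : #(covered 𝓐) = k * #𝓐 := by
  rw [covered, card_biUnion h.pairwiseDisjoint, mul_comm]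
  exact sum_const_nat h.card_eq

theorem IsPacking.card_cell_le (h : IsPacking G big k 𝓐) (hk : 1 ≤ k) (v : V) :
    #(cell 𝓐 v) ≤ k := by
  by_cases hv : v ∈ covered 𝓐
  · obtain ⟨S, hS, hvS⟩ := mem_covered.1 hv
    rw [cell_of_mem h.pairwiseDisjoint hS hvS, h.card_eq S hS]
  · rwa [cell_of_notMem_covered hv, card_singleton]

theorem IsPacking.card_saturate_sdiff_le (h : IsPacking G big k 𝓐) (hk : 1 ≤ k) (x : V)
    (J : Finset V) : #(saturate 𝓐 (G.neighborFinset x) \ J) ≤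
      k * degIn G x (covered 𝓐) + degIn G x ((covered 𝓐)ᶜ \ J) := by
  have hsub : saturate 𝓐 (G.neighborFinset x) \ J ⊆
      ({u ∈ covered 𝓐 | G.Adj x u} : Finset V).biUnion (cell 𝓐) ∪
        {u ∈ (covered 𝓐)ᶜ \ J | G.Adj x u} := by
    intro u hu
    obtain ⟨hu, huJ⟩ := mem_sdiff.1 hu
    obtain ⟨w, hw, huw⟩ := mem_biUnion.1 hu
    have hw := (G.mem_neighborFinset x w).1 hw
    by_cases hwC : w ∈ covered 𝓐
    · exact mem_union_left _ (mem_biUnion.2 ⟨w, mem_filter.2 ⟨hwC, hw⟩, huw⟩)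
    · rw [cell_of_notMem_covered hwC, mem_singleton] at huw
      subst huw
      exact mem_union_right _
        (mem_filter.2 ⟨mem_sdiff.2 ⟨mem_compl.2 hwC, huJ⟩, hw⟩)
  refine (card_le_card hsub).trans ((card_union_le _ _).trans (Nat.add_le_add_right ?_ _))
  rw [mul_comm]
  exact card_biUnion_le_card_mul _ _ _ fun v _ ↦ h.card_cell_le hk v

theorem card_saturate_sdiff_le_of_subset_insert (h𝓐 : 𝓐 ⊆ insert S 𝓑) (U J : Finset V) :
    #(saturate 𝓐 U \ J) ≤ #(saturate 𝓑 U \ J) + #S := by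
  refine (card_le_card fun u hu ↦ ?_).trans (card_union_le _ _)
  obtain ⟨hu, huJ⟩ := mem_sdiff.1 hu
  obtain ⟨w, hw, huw⟩ := mem_biUnion.1 hu
  rw [mem_union, mem_sdiff, saturate, mem_biUnion]
  obtain rfl | ⟨T, hT, huT, hwT⟩ := mem_cell.1 huw
  · exact .inl ⟨⟨u, hw, mem_cell_self 𝓑 u⟩, huJ⟩
  · obtain rfl | hT := mem_insert.1 (h𝓐 hT)
    · exact .inr huT
    · exact .inl ⟨⟨w, hw, mem_cell.2 (.inr ⟨T, hT, huT, hwT⟩)⟩, huJ⟩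

/-- The vertices of degree at least `10kd`. -/
def bigVertices (G : SimpleGraph V) (k : ℕ) (d : ℝ) : Finset V := {v | 10 * k * d ≤ degIn G v univ}

/-- The quantity maximised by the packing: contracting should keep many edges, and in exchange
for new blocks, or for covering more vertices of large degree, some edges may be lost. -/
def potential (G : SimpleGraph V) (k : ℕ) (d : ℝ) (𝓐 : Finset (Finset V)) : ℝ :=
  (G.map (cell 𝓐)).edgeSet.ncard + 13 * d * #𝓐 + d / k * #(covered 𝓐 ∩ bigVertices G k d)

/-- A packing of maximum potential. -/
structure IsOptimalPacking (G : SimpleGraph V) (k : ℕ) (d : ℝ) (𝓑 : Finset (Finset V)) : Prop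
    extends IsPacking G (bigVertices G k d) k 𝓑 where
  potential_le : ∀ 𝓐, IsPacking G (bigVertices G k d) k 𝓐 → potential G k d 𝓐 ≤ potential G k d 𝓑

omit [Fintype V] in
theorem isPacking_empty (G : SimpleGraph V) (big : Finset V) (k : ℕ) : IsPacking G big k ∅ where
  pairwiseDisjoint := by simp
  isClump := by simp
  card_eq := by simp

theorem exists_isOptimalPacking (G : SimpleGraph V) (k : ℕ) (d : ℝ) :
    ∃ 𝓑, IsOptimalPacking G k d 𝓑 := by
  obtain ⟨𝓑, h𝓑, hmax⟩ := exists_max_image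
    ({𝓐 | IsPacking G (bigVertices G k d) k 𝓐} : Finset (Finset (Finset V))) (potential G k d)
    ⟨∅, mem_filter.2 ⟨mem_univ _, isPacking_empty G _ k⟩⟩
  exact ⟨𝓑, (mem_filter.1 h𝓑).2, fun 𝓐 h ↦ hmax 𝓐 (mem_filter.2 ⟨mem_univ _, h⟩)⟩

/-- The uncovered vertices with few neighbours both among the covered and among the uncovered
vertices; at most `4d / k` of their neighbours are again of this kind. -/
def residual (G : SimpleGraph V) (k : ℕ) (d : ℝ) (𝓑 : Finset (Finset V)) : Finset V :=
  {v ∈ (covered 𝓑)ᶜ | degIn G v (covered 𝓑) < 10 * k * d ∧ degIn G v (covered 𝓑)ᶜ ≤ k ^ 2 * d}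

theorem disjoint_residual_covered : Disjoint (residual G k d 𝓑) (covered 𝓑) :=
  disjoint_left.2 fun _ hv ↦ mem_compl.1 (mem_filter.1 hv).1

/-- The graphs to which the packing argument applies: no small subgraph is dense, the density is at
least `d`, and no proper induced subgraph has density greater than `d`. As `interedges` counts
ordered pairs, density `d` reads `2d` here. -/
structure IsCritical (G : SimpleGraph V) (k : ℕ) (d : ℝ) : Prop where
  hundred_le : 100 ≤ k
  sq_le : (k : ℝ) ^ 2 ≤ d
  isLocallySparse : IsLocallySparse G k d
  nonempty : Nonempty V
  le_card_interedges : 2 * d * Fintype.card V ≤ #(G.interedges univ univ)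
  card_interedges_le : ∀ U : Finset V, U ≠ univ → #(G.interedges U U) ≤ 2 * d * #U

theorem IsCritical.hundred_le_cast (hG : IsCritical G k d) : (100 : ℝ) ≤ k :=
  mod_cast hG.hundred_le

theorem IsCritical.pos (hG : IsCritical G k d) : 0 < d := by
  have := hG.hundred_le_cast
  nlinarith [hG.sq_le]

theorem IsCritical.le_div (hG : IsCritical G k d) : k ≤ d / k := by
  have := hG.hundred_le_cast
  rw [le_div_iff₀ (by linarith), ← sq]
  exact hG.sq_le

theorem IsStarSite.exists_isPacking_insert {x : V} {L J : Finset V}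
    (h : IsStarSite G k d 𝓐 x L J) (hG : IsCritical G k d) (h𝓐 : IsPacking G big k 𝓐) :
    ∃ S ⊆ insert x L, #S = k ∧ #(insert S 𝓐) = #𝓐 + 1 ∧ IsPacking G big k (insert S 𝓐) ∧
      ((G.map (cell 𝓐)).edgeSet.ncard : ℝ) ≤
        (G.map (cell (insert S 𝓐))).edgeSet.ncard + 5.6 * d := by
  obtain ⟨S, hSL, hcard, hclump, hloss⟩ :=
    h.exists_clump hG.isLocallySparse hG.hundred_le hG.sq_le big
  have hdisj : Disjoint S (covered 𝓐) := disjoint_of_subset_left hSL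
    (disjoint_insert_left.2 ⟨h.center_notMem_covered, h.disjoint_leaves⟩)
  exact ⟨S, hSL, hcard, card_insert_of_notMem (hclump.notMem_of_disjoint_covered hdisj),
    h𝓐.insert hclump hcard hdisj, hloss⟩

theorem IsOptimalPacking.not_isStarSite (h : IsOptimalPacking G k d 𝓑) (hG : IsCritical G k d)
    {x : V} {L J : Finset V} : ¬ IsStarSite G k d 𝓑 x L J := by
  intro hsite
  obtain ⟨S, -, -, hcard, hS, hloss⟩ := hsite.exists_isPacking_insert hG h.toIsPacking
  have hmax := h.potential_le _ hS
  have hd := hG.pos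
  have hbig : d / k * #(covered 𝓑 ∩ bigVertices G k d) ≤
      d / k * #(covered (insert S 𝓑) ∩ bigVertices G k d) := by
    rw [covered_insert]
    gcongr
    exact subset_union_right
  rw [potential, potential, hcard] at hmax
  push_cast at hmax
  linarith

theorem IsOptimalPacking.card_saturate_residual_le (h : IsOptimalPacking G k d 𝓑)
    (hG : IsCritical G k d) {x : V} (hx : x ∈ residual G k d 𝓑) (J : Finset V) :
    (#(saturate 𝓑 (G.neighborFinset x) \ J) : ℝ) ≤ 11 * k ^ 2 * d := by
  obtain ⟨-, hC, hC'⟩ := mem_filter.1 hx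
  have hsat := h.toIsPacking.card_saturate_sdiff_le (by linarith [hG.hundred_le]) x J
  have hmono := degIn_mono G x (sdiff_subset (s := (covered 𝓑)ᶜ) (t := J))
  calc (#(saturate 𝓑 (G.neighborFinset x) \ J) : ℝ)
      ≤ k * degIn G x (covered 𝓑) + degIn G x (covered 𝓑)ᶜ := by
        exact_mod_cast hsat.trans (Nat.add_le_add_left hmono _)
    _ ≤ k * (10 * k * d) + k ^ 2 * d := by gcongr
    _ = 11 * k ^ 2 * d := by ring

theorem IsOptimalPacking.degIn_residual_lt (h : IsOptimalPacking G k d 𝓑) (hG : IsCritical G k d)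
    {x : V} (hx : x ∈ residual G k d 𝓑) : degIn G x (residual G k d 𝓑) < 4 * d / k := by
  by_contra! hdeg
  have hd := hG.pos
  have hk := hG.hundred_le_cast
  have hdk := hG.le_div
  refine h.not_isStarSite hG (x := x) (L := (residual G k d 𝓑).erase x) (J := ∅) ⟨
    h.pairwiseDisjoint, mem_compl.1 (mem_filter.1 hx).1, notMem_erase x _,
    disjoint_residual_covered.mono_left (erase_subset _ _), fun l _ ↦ ?_, fun l hl ↦ ?_, ?_, ?_⟩
  · rw [degIn, filter_empty, card_empty, Nat.cast_zero]
    positivity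
  · have := h.card_saturate_residual_le hG (mem_of_mem_erase hl) ∅
    rw [sdiff_empty] at this
    exact this.trans (by gcongr; norm_num)
  · refine (h.card_saturate_residual_le hG hx ∅).trans ?_
    calc 11 * (k : ℝ) ^ 2 * d ≤ 4 * k * k ^ 2 * d := by gcongr; linarith
      _ = 4 * k ^ 3 * d := by ring
  · rw [degIn_erase_self]
    rw [mul_div_assoc] at hdeg ⊢
    linarith

/-- The complement of the residual vertices: the covered vertices, and the uncovered ones with many
covered or many uncovered neighbours. -/
def core (G : SimpleGraph V) (k : ℕ) (d : ℝ) (𝓑 : Finset (Finset V)) : Finset V :=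
  (residual G k d 𝓑)ᶜ

theorem covered_subset_core : covered 𝓑 ⊆ core G k d 𝓑 :=
  subset_compl_iff_disjoint_left.2 disjoint_residual_covered

theorem card_saturate_sdiff_residual_le (h : IsPacking G big k 𝓑) (hk : 1 ≤ k) (x : V) :
    #(saturate 𝓑 (G.neighborFinset x) \ residual G k d 𝓑) ≤ k * degIn G x (core G k d 𝓑) := by
  have hcore : core G k d 𝓑 = covered 𝓑 ∪ ((covered 𝓑)ᶜ \ residual G k d 𝓑) := by
    have := disjoint_left.1 (disjoint_residual_covered (G := G) (k := k) (d := d) (𝓑 := 𝓑))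
    ext v
    rw [core, mem_compl, mem_union, mem_sdiff, mem_compl]
    specialize @this v
    tauto
  rw [hcore, degIn_union_of_disjoint _ _ (disjoint_compl_right.mono_right sdiff_subset), mul_add]
  exact (h.card_saturate_sdiff_le hk x _).trans
    (Nat.add_le_add_left (Nat.le_mul_of_pos_left _ hk) _)

theorem IsOptimalPacking.isStarSite_residual (h : IsOptimalPacking G k d 𝓑)
    (hG : IsCritical G k d) {x : V} (h𝓐 : 𝓐 ⊆ insert S 𝓑)
    (hdisj : (𝓐 : Set (Finset V)).PairwiseDisjoint id) (hS : #S ≤ k) (hx𝓐 : x ∉ covered 𝓐)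
    (hxcore : x ∈ core G k d 𝓑) (hlight : degIn G x (core G k d 𝓑) < k ^ 2 * d / 2)
    (hdeg : 4 * d / k ≤ degIn G x (residual G k d 𝓑)) :
    IsStarSite G k d 𝓐 x (residual G k d 𝓑 \ S) (residual G k d 𝓑) := by
  have hd := hG.pos
  have hk := hG.hundred_le_cast
  have hdk := hG.le_div
  have hS' : (#S : ℝ) ≤ k := mod_cast hS
  have hkd : (k : ℝ) ≤ k ^ 2 * d :=
    calc (k : ℝ) ≤ k ^ 2 * 1 := by nlinarith
      _ ≤ k ^ 2 * d := by gcongr; nlinarith [hG.sq_le]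
  refine ⟨hdisj, hx𝓐, fun hx ↦ mem_compl.1 hxcore (mem_sdiff.1 hx).1, ?_, fun l hl ↦ ?_,
    fun l hl ↦ ?_, ?_, ?_⟩
  · have hcov : covered 𝓐 ⊆ S ∪ covered 𝓑 :=
      covered_insert (𝓐 := 𝓑) ▸ biUnion_subset_biUnion_of_subset_left id h𝓐
    exact (disjoint_union_right.2 ⟨sdiff_disjoint,
      disjoint_residual_covered.mono_left sdiff_subset⟩).mono_right hcov
  · exact (h.degIn_residual_lt hG (mem_sdiff.1 hl).1).le
  · have hsat : (#(saturate 𝓐 (G.neighborFinset l) \ ∅) : ℝ) ≤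
        #(saturate 𝓑 (G.neighborFinset l) \ ∅) + #S :=
      mod_cast card_saturate_sdiff_le_of_subset_insert h𝓐 _ ∅
    rw [sdiff_empty] at hsat
    linarith [h.card_saturate_residual_le hG (mem_sdiff.1 hl).1 ∅]
  · have hsat : (#(saturate 𝓐 (G.neighborFinset x) \ residual G k d 𝓑) : ℝ) ≤
        k * degIn G x (core G k d 𝓑) + #S :=
      mod_cast (card_saturate_sdiff_le_of_subset_insert h𝓐 _ _).trans (Nat.add_le_add_right
        (card_saturate_sdiff_residual_le h.toIsPacking (by linarith [hG.hundred_le]) x) _)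
    calc _ ≤ k * (k ^ 2 * d / 2) + k ^ 2 * d := hsat.trans (by gcongr; linarith)
      _ = (k / 2 + 1) * (k ^ 2 * d) := by ring
      _ ≤ 4 * k * (k ^ 2 * d) := by gcongr; linarith
      _ = 4 * k ^ 3 * d := by ring
  · have hsplit : (degIn G x (residual G k d 𝓑) : ℝ) ≤ degIn G x (residual G k d 𝓑 \ S) + k := by
      have := degIn_union_le G x (residual G k d 𝓑 \ S) S
      rw [sdiff_union_self_eq_union] at this
      exact_mod_cast (degIn_mono G x subset_union_left).trans
        (this.trans (Nat.add_le_add_left ((degIn_le_card G x S).trans hS) _))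
    rw [mul_div_assoc] at hdeg ⊢
    linarith

theorem IsOptimalPacking.degIn_residual_lt_of_notMem_covered (h : IsOptimalPacking G k d 𝓑)
    (hG : IsCritical G k d) {x : V} (hxcore : x ∈ core G k d 𝓑) (hx : x ∉ covered 𝓑)
    (hlight : degIn G x (core G k d 𝓑) < k ^ 2 * d / 2) :
    degIn G x (residual G k d 𝓑) < 4 * d / k := by
  by_contra! hdeg
  exact h.not_isStarSite hG (h.isStarSite_residual hG (S := ∅) (subset_insert _ _)
    h.pairwiseDisjoint (by simp) hx hxcore hlight hdeg)

theorem IsOptimalPacking.le_degIn_covered (h : IsOptimalPacking G k d 𝓑)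
    (hG : IsCritical G k d) {x : V} (hxcore : x ∈ core G k d 𝓑) (hx : x ∉ covered 𝓑)
    (hlight : degIn G x (core G k d 𝓑) < k ^ 2 * d / 2) :
    10 * k * d ≤ degIn G x (covered 𝓑) := by
  have := hG.pos
  have hk := hG.hundred_le_cast
  have hresidual := h.degIn_residual_lt_of_notMem_covered hG hxcore hx hlight
  have hsplit : (degIn G x (covered 𝓑)ᶜ : ℝ) ≤
      degIn G x (core G k d 𝓑) + degIn G x (residual G k d 𝓑) := by
    have := degIn_union_le G x (core G k d 𝓑) (residual G k d 𝓑)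
    rw [core, union_comm, union_compl] at this
    exact_mod_cast (degIn_mono G x (subset_univ _)).trans this
  have hsmall : 4 * d / k ≤ k ^ 2 * d / 2 := by
    rw [div_le_iff₀ (by linarith)]
    have : (100 : ℝ) ^ 3 ≤ k ^ 3 := by gcongr
    nlinarith
  by_contra! hC
  exact mem_compl.1 hxcore (mem_filter.2 ⟨mem_compl.2 hx, hC, by linarith⟩)

theorem IsOptimalPacking.le_degIn_core (h : IsOptimalPacking G k d 𝓑)
    (hG : IsCritical G k d) {x : V} (hxcore : x ∈ core G k d 𝓑) (hx : x ∉ covered 𝓑) :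
    10 * k * d ≤ degIn G x (core G k d 𝓑) := by
  obtain hlight | hheavy := lt_or_ge (degIn G x (core G k d 𝓑) : ℝ) (k ^ 2 * d / 2)
  · exact (h.le_degIn_covered hG hxcore hx hlight).trans
      (mod_cast degIn_mono G x covered_subset_core)
  · have := hG.pos
    have := hG.hundred_le_cast
    calc 10 * k * d ≤ k / 2 * k * d := by gcongr; linarith
      _ = k ^ 2 * d / 2 := by ring
      _ ≤ _ := hheavy

omit [Fintype V] in
theorem notMem_covered_erase {B : Finset V} {v : V}
    (h : (𝓑 : Set (Finset V)).PairwiseDisjoint id) (hB : B ∈ 𝓑) (hv : v ∈ B) :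
    v ∉ covered (𝓑.erase B) := by
  intro hv'
  obtain ⟨S, hS, hvS⟩ := mem_covered.1 hv'
  exact (mem_erase.1 hS).1 (h.elim_finset (mem_of_mem_erase hS) hB v hvS hv)

/-- Dissolving a block costs no edges, and at most `d` through the covered big vertices. -/
theorem IsOptimalPacking.ncard_edgeSet_add_le (h : IsOptimalPacking G k d 𝓑)
    (hG : IsCritical G k d) {B : Finset V} (hB : B ∈ 𝓑)
    (h𝓐 : IsPacking G (bigVertices G k d) k 𝓐) (hsub : 𝓑.erase B ⊆ 𝓐) (hcard : #𝓐 = #𝓑 + 1) :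
    ((G.map (cell 𝓐)).edgeSet.ncard : ℝ) + 12 * d ≤ (G.map (cell (𝓑.erase B))).edgeSet.ncard := by
  have hmax := h.potential_le 𝓐 h𝓐
  have hedge : ((G.map (cell 𝓑)).edgeSet.ncard : ℝ) ≤ (G.map (cell (𝓑.erase B))).edgeSet.ncard :=
    mod_cast ncard_edgeSet_map_cell_le G h.pairwiseDisjoint fun T hT u hu v hv ↦
      mem_cell.2 (.inr ⟨T, mem_of_mem_erase hT, hu, hv⟩)
  have hbig : #(covered 𝓑 ∩ bigVertices G k d) ≤ #(covered 𝓐 ∩ bigVertices G k d) + k := by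
    rw [← h.card_eq B hB]
    refine (card_le_card fun v hv ↦ ?_).trans (card_union_le _ _)
    obtain ⟨hvC, hvbig⟩ := mem_inter.1 hv
    obtain ⟨S, hS, hvS⟩ := mem_covered.1 hvC
    by_cases hSB : S = B
    · exact mem_union_right _ (hSB ▸ hvS)
    · exact mem_union_left _
        (mem_inter.2 ⟨mem_covered.2 ⟨S, hsub (mem_erase.2 ⟨hSB, hS⟩), hvS⟩, hvbig⟩)
  have hd := hG.pos
  have hk := hG.hundred_le_cast
  have hbig : d / k * #(covered 𝓑 ∩ bigVertices G k d) ≤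
      d / k * #(covered 𝓐 ∩ bigVertices G k d) + d :=
    calc d / k * #(covered 𝓑 ∩ bigVertices G k d)
        ≤ d / k * (#(covered 𝓐 ∩ bigVertices G k d) + k) := by gcongr; exact_mod_cast hbig
      _ = _ := by rw [mul_add, div_mul_cancel₀ _ (by positivity)]
  rw [potential, potential, hcard] at hmax
  push_cast at hmax
  linarith

/-- The covered vertices with many residual neighbours. -/
def contacts (G : SimpleGraph V) (k : ℕ) (d : ℝ) (𝓑 : Finset (Finset V)) : Finset V :=
  {v ∈ covered 𝓑 | 4 * d / k ≤ degIn G v (residual G k d 𝓑)}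

/-- Two light contacts in a block would allow to replace the block by two residual stars. -/
theorem IsOptimalPacking.contacts_unique (h : IsOptimalPacking G k d 𝓑) (hG : IsCritical G k d)
    {B : Finset V} (hB : B ∈ 𝓑) {y z : V} (hyB : y ∈ B) (hzB : z ∈ B)
    (hy : y ∈ contacts G k d 𝓑) (hz : z ∈ contacts G k d 𝓑)
    (hylight : degIn G y (core G k d 𝓑) < k ^ 2 * d / 2)
    (hzlight : degIn G z (core G k d 𝓑) < k ^ 2 * d / 2) : y = z := by
  by_contra hyz
  have hcore {v} (hv : v ∈ B) : v ∈ core G k d 𝓑 := covered_subset_core (subset_covered hB hv)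
  have h₀ : IsPacking G (bigVertices G k d) k (𝓑.erase B) := h.toIsPacking.subset (erase_subset _ _)
  have hsite₁ := h.isStarSite_residual hG (S := ∅)
    ((erase_subset _ _).trans (subset_insert _ _)) h₀.pairwiseDisjoint (by simp)
    (notMem_covered_erase h.pairwiseDisjoint hB hyB) (hcore hyB) hylight (mem_filter.1 hy).2
  obtain ⟨S₁, hS₁L, hS₁k, hcard₁, h₁, hloss₁⟩ := hsite₁.exists_isPacking_insert hG h₀
  have hzS₁ : z ∉ S₁ := by
    intro hz'
    obtain rfl | hz' := mem_insert.1 (hS₁L hz')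
    · exact hyz rfl
    · exact mem_compl.1 (hcore hzB) (mem_sdiff.1 hz').1
  have hz₁ : z ∉ covered (insert S₁ (𝓑.erase B)) := by
    rw [covered_insert, mem_union, not_or]
    exact ⟨hzS₁, notMem_covered_erase h.pairwiseDisjoint hB hzB⟩
  have hsite₂ := h.isStarSite_residual hG (insert_subset_insert S₁ (erase_subset B 𝓑))
    h₁.pairwiseDisjoint hS₁k.le hz₁ (hcore hzB) hzlight (mem_filter.1 hz).2
  obtain ⟨S₂, -, -, hcard₂, h₂, hloss₂⟩ := hsite₂.exists_isPacking_insert hG h₁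
  have hgain := h.ncard_edgeSet_add_le hG hB h₂ ((subset_insert _ _).trans (subset_insert _ _))
    (by rw [hcard₂, hcard₁, card_erase_add_one hB])
  linarith [hG.pos]

end OptimalPacking

section Counting

variable {V : Type*} [Fintype V] {G : SimpleGraph V} {k : ℕ} {d : ℝ} {𝓑 : Finset (Finset V)}

/-- Deleting a vertex of minimum degree leaves a proper subset, so that the density bound for
proper subsets passes to the whole graph up to a factor of two. -/
theorem IsCritical.card_interedges_le_four_mul (hG : IsCritical G k d) (U : Finset V) :
    #(G.interedges U U) ≤ 4 * d * #U := by
  have hd := hG.pos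
  by_cases hU : U ≠ univ
  · have : d * #U ≥ 0 := by positivity
    linarith [hG.card_interedges_le U hU]
  obtain rfl := not_ne_iff.1 hU
  have := hG.nonempty
  obtain ⟨v, -, hv⟩ := exists_le_of_sum_le (s := univ) (f := fun v ↦ #(univ : Finset V) *
      degIn G v univ) (g := fun _ ↦ #(G.interedges univ univ)) univ_nonempty
    (by rw [sum_const, ← mul_sum, ← card_interedges_eq_sum_degIn, smul_eq_mul])
  have herase := hG.card_interedges_le (univ.erase v) (by simp [erase_eq_self])
  rw [cast_card_erase_of_mem (mem_univ v)] at herase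
  have hE := hG.le_card_interedges
  rw [← card_univ] at hE
  have hn : (0 : ℝ) < #(univ : Finset V) := mod_cast card_pos.2 univ_nonempty
  have hn4 : (4 : ℝ) ≤ #(univ : Finset V) := by
    have hsq : (#(G.interedges univ univ) : ℝ) ≤ #(univ : Finset V) * #(univ : Finset V) :=
      mod_cast Rel.card_interedges_le_mul ..
    nlinarith [hG.sq_le, hG.hundred_le_cast, le_of_mul_le_mul_right (hE.trans hsq) hn]
  have hv : (#(univ : Finset V) : ℝ) * degIn G v univ ≤ #(G.interedges univ univ) := mod_cast hv
  have hsplit : (#(G.interedges univ univ) : ℝ) =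
      #(G.interedges (univ.erase v) (univ.erase v)) + 2 * degIn G v univ :=
    mod_cast card_interedges_eq_erase_add G (mem_univ v)
  nlinarith [mul_le_mul_of_nonneg_right hn4 (degIn G v univ).cast_nonneg (α := ℝ)]

/-- The vertices of `U` with at least `t` neighbours in `U`. -/
def highDegIn (G : SimpleGraph V) (U : Finset V) (t : ℝ) : Finset V := {v ∈ U | t ≤ degIn G v U}

theorem IsCritical.mul_card_highDegIn_le (hG : IsCritical G k d) (U : Finset V) (t : ℝ) :
    t * #(highDegIn G U t) ≤ 4 * d * #U := by
  have hunion : highDegIn G U t ∪ U = U := union_eq_right.2 (filter_subset _ _)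
  have := mul_card_le_of_le_degIn G (hG.card_interedges_le_four_mul (highDegIn G U t ∪ U))
    fun u hu ↦ (mem_filter.1 hu).2
  rwa [hunion] at this

/-- The core vertices of degree at least `9.9kd` in the core. -/
def rich (G : SimpleGraph V) (k : ℕ) (d : ℝ) (𝓑 : Finset (Finset V)) : Finset V :=
  highDegIn G (core G k d 𝓑) (9.9 * k * d)

/-- The core vertices of degree at least `k²d / 2` in the core. -/
def heavy (G : SimpleGraph V) (k : ℕ) (d : ℝ) (𝓑 : Finset (Finset V)) : Finset V :=
  highDegIn G (core G k d 𝓑) (k ^ 2 * d / 2)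

theorem IsCritical.heavy_subset_rich (hG : IsCritical G k d) :
    heavy G k d 𝓑 ⊆ rich G k d 𝓑 := by
  have := hG.hundred_le_cast
  have hd := hG.pos
  refine monotone_filter_right _ fun v _ hv ↦ le_trans ?_ hv
  calc 9.9 * k * d ≤ k / 2 * k * d := by gcongr; linarith
    _ = k ^ 2 * d / 2 := by ring

theorem degIn_core_lt_of_notMem_heavy {v : V} (hcore : v ∈ core G k d 𝓑)
    (hv : v ∉ heavy G k d 𝓑) : degIn G v (core G k d 𝓑) < k ^ 2 * d / 2 := by
  by_contra! h
  exact hv (mem_filter.2 ⟨hcore, h⟩)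

theorem IsOptimalPacking.core_sdiff_covered_subset_rich (h : IsOptimalPacking G k d 𝓑)
    (hG : IsCritical G k d) : core G k d 𝓑 \ covered 𝓑 ⊆ rich G k d 𝓑 := by
  intro v hv
  obtain ⟨hcore, hv⟩ := mem_sdiff.1 hv
  refine mem_filter.2 ⟨hcore, le_trans ?_ (h.le_degIn_core hG hcore hv)⟩
  have := hG.pos
  gcongr
  norm_num

theorem IsOptimalPacking.card_core (h : IsOptimalPacking G k d 𝓑) :
    #(core G k d 𝓑) = k * #𝓑 + #(core G k d 𝓑 \ covered 𝓑) := by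
  rw [← h.toIsPacking.card_covered, add_comm, card_sdiff_add_card_eq_card covered_subset_core]

theorem IsOptimalPacking.card_rich_le (h : IsOptimalPacking G k d 𝓑) (hG : IsCritical G k d) :
    (#(rich G k d 𝓑) : ℝ) ≤ 0.41 * #𝓑 := by
  have hd := hG.pos
  have hk := hG.hundred_le_cast
  have hrich := hG.mul_card_highDegIn_le (core G k d 𝓑) (9.9 * k * d)
  rw [h.card_core, ← rich] at hrich
  have hsub : (#(core G k d 𝓑 \ covered 𝓑) : ℝ) ≤ #(rich G k d 𝓑) :=
    mod_cast card_le_card (h.core_sdiff_covered_subset_rich hG)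
  have hrich : d * (9.9 * k * #(rich G k d 𝓑)) ≤ d * (4 * (k * #𝓑 + #(rich G k d 𝓑))) :=
    calc d * (9.9 * k * #(rich G k d 𝓑)) = 9.9 * k * d * #(rich G k d 𝓑) := by ring
      _ ≤ 4 * d * (k * #𝓑 + #(core G k d 𝓑 \ covered 𝓑)) := mod_cast hrich
      _ ≤ 4 * d * (k * #𝓑 + #(rich G k d 𝓑)) := by gcongr
      _ = d * (4 * (k * #𝓑 + #(rich G k d 𝓑))) := by ring
  have hrich := le_of_mul_le_mul_left hrich hd
  refine le_of_mul_le_mul_left (a := (k : ℝ)) ?_ (by linarith)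
  nlinarith [mul_le_mul_of_nonneg_right hk (#(rich G k d 𝓑)).cast_nonneg]

theorem IsOptimalPacking.mul_card_heavy_le (h : IsOptimalPacking G k d 𝓑)
    (hG : IsCritical G k d) : k * (#(heavy G k d 𝓑) : ℝ) ≤ 8.04 * #𝓑 := by
  have hd := hG.pos
  have hk := hG.hundred_le_cast
  have hheavy := hG.mul_card_highDegIn_le (core G k d 𝓑) (k ^ 2 * d / 2)
  rw [h.card_core, ← heavy] at hheavy
  have hcore : (#(core G k d 𝓑 \ covered 𝓑) : ℝ) ≤ 0.41 * #𝓑 :=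
    le_trans (mod_cast card_le_card (h.core_sdiff_covered_subset_rich hG)) (h.card_rich_le hG)
  refine le_of_mul_le_mul_left (a := k * d / 2) ?_ (by positivity)
  calc k * d / 2 * (k * (#(heavy G k d 𝓑) : ℝ)) = k ^ 2 * d / 2 * #(heavy G k d 𝓑) := by ring
    _ ≤ 4 * d * (k * #𝓑 + #(core G k d 𝓑 \ covered 𝓑)) := mod_cast hheavy
    _ ≤ 4 * d * (k * #𝓑 + k / 100 * (0.41 * #𝓑)) := by
      gcongr
      exact hcore.trans (le_mul_of_one_le_left (by positivity) (by linarith))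
    _ ≤ k * d / 2 * (8.04 * #𝓑) := by
      have : 0 ≤ k * d * #𝓑 := by positivity
      linarith

theorem IsOptimalPacking.sum_card_inter (h : IsOptimalPacking G k d 𝓑) {𝓐 : Finset (Finset V)}
    (h𝓐 : 𝓐 ⊆ 𝓑) (X : Finset V) : ∑ B ∈ 𝓐, #(B ∩ X) = #(covered 𝓐 ∩ X) := by
  rw [covered, biUnion_inter, card_biUnion fun B hB C hC hne ↦
    (h.pairwiseDisjoint (h𝓐 hB) (h𝓐 hC) hne).mono inter_subset_left inter_subset_left]
  rfl

theorem IsOptimalPacking.card_inter_contacts_sdiff_heavy_le (h : IsOptimalPacking G k d 𝓑)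
    (hG : IsCritical G k d) {B : Finset V} (hB : B ∈ 𝓑) :
    #(B ∩ (contacts G k d 𝓑 \ heavy G k d 𝓑)) ≤ 1 := by
  refine card_le_one.2 fun y hy z hz ↦ ?_
  obtain ⟨hyB, hy⟩ := mem_inter.1 hy
  obtain ⟨hzB, hz⟩ := mem_inter.1 hz
  obtain ⟨hy, hyheavy⟩ := mem_sdiff.1 hy
  obtain ⟨hz, hzheavy⟩ := mem_sdiff.1 hz
  have hcore {v} (hv : v ∈ B) : v ∈ core G k d 𝓑 := covered_subset_core (subset_covered hB hv)
  exact h.contacts_unique hG hB hyB hzB hy hz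
    (degIn_core_lt_of_notMem_heavy (hcore hyB) hyheavy)
    (degIn_core_lt_of_notMem_heavy (hcore hzB) hzheavy)

theorem IsOptimalPacking.card_contacts_sdiff_heavy_le (h : IsOptimalPacking G k d 𝓑)
    (hG : IsCritical G k d) : #(contacts G k d 𝓑 \ heavy G k d 𝓑) ≤ #𝓑 := by
  have hsub : contacts G k d 𝓑 \ heavy G k d 𝓑 ⊆ covered 𝓑 :=
    sdiff_subset.trans (filter_subset _ _)
  rw [← inter_eq_right.2 hsub, ← h.sum_card_inter Subset.rfl, card_eq_sum_ones]
  exact sum_le_sum fun B hB ↦ h.card_inter_contacts_sdiff_heavy_le hG hB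

/-- A covered vertex of large degree sees either many residual vertices or many core vertices. -/
theorem IsCritical.covered_inter_bigVertices_subset (hG : IsCritical G k d) :
    covered 𝓑 ∩ bigVertices G k d ⊆
      contacts G k d 𝓑 \ heavy G k d 𝓑 ∪ rich G k d 𝓑 := by
  intro v hv
  obtain ⟨hvC, hvbig⟩ := mem_inter.1 hv
  by_contra hv
  rw [mem_union, mem_sdiff, not_or] at hv
  have hresidual : degIn G v (residual G k d 𝓑) < 4 * d / k := by
    by_contra! hcontact
    exact hv.1 ⟨mem_filter.2 ⟨hvC, hcontact⟩, fun hheavy ↦ hv.2 (hG.heavy_subset_rich hheavy)⟩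
  have hcore : degIn G v (core G k d 𝓑) < 9.9 * k * d := by
    by_contra! hrich
    exact hv.2 (mem_filter.2 ⟨covered_subset_core hvC, hrich⟩)
  have hbig : 10 * k * d ≤ degIn G v univ := (mem_filter.1 hvbig).2
  have hsplit : (degIn G v univ : ℝ) ≤
      degIn G v (core G k d 𝓑) + degIn G v (residual G k d 𝓑) := by
    have := degIn_union_le G v (core G k d 𝓑) (residual G k d 𝓑)
    rw [core, union_comm, union_compl] at this
    exact_mod_cast this
  have hsmall : 4 * d / k ≤ 0.1 * k * d := by
    have := hG.hundred_le_cast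
    rw [div_le_iff₀ (by linarith)]
    nlinarith [hG.pos, mul_le_mul this this (by norm_num) (by linarith)]
  linarith

/-- The blocks in which more than a quarter of the vertices have large degree. -/
def crowdedBlocks (G : SimpleGraph V) (k : ℕ) (d : ℝ) (𝓑 : Finset (Finset V)) :
    Finset (Finset V) :=
  {B ∈ 𝓑 | k < 4 * #(B ∩ bigVertices G k d)}

theorem crowdedBlocks_subset : crowdedBlocks G k d 𝓑 ⊆ 𝓑 := filter_subset _ _

theorem IsOptimalPacking.mul_card_crowdedBlocks_le (h : IsOptimalPacking G k d 𝓑)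
    (hG : IsCritical G k d) : k * (#(crowdedBlocks G k d 𝓑) : ℝ) ≤ 1.71 * #𝓑 := by
  have hblock : ∀ B ∈ crowdedBlocks G k d 𝓑, k ≤ 4 * #(B ∩ rich G k d 𝓑) + 4 := by
    intro B hB
    obtain ⟨hB, hcrowded⟩ := mem_filter.1 hB
    have hsub : B ∩ bigVertices G k d ⊆
        B ∩ (contacts G k d 𝓑 \ heavy G k d 𝓑) ∪ B ∩ rich G k d 𝓑 := by
      rw [← inter_union_distrib_left]
      refine subset_inter inter_subset_left (Subset.trans ?_ hG.covered_inter_bigVertices_subset)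
      exact inter_subset_inter_right (subset_covered hB)
    have := (card_le_card hsub).trans (card_union_le _ _)
    have := h.card_inter_contacts_sdiff_heavy_le hG hB
    omega
  have hsum : #(crowdedBlocks G k d 𝓑) * k ≤
      4 * #(rich G k d 𝓑) + 4 * #(crowdedBlocks G k d 𝓑) :=
    calc #(crowdedBlocks G k d 𝓑) * k = ∑ _B ∈ crowdedBlocks G k d 𝓑, k := by
          rw [sum_const, smul_eq_mul]
      _ ≤ ∑ B ∈ crowdedBlocks G k d 𝓑, (4 * #(B ∩ rich G k d 𝓑) + 4) := sum_le_sum hblock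
      _ = 4 * #(covered (crowdedBlocks G k d 𝓑) ∩ rich G k d 𝓑) +
            4 * #(crowdedBlocks G k d 𝓑) := by
          rw [sum_add_distrib, ← mul_sum, h.sum_card_inter crowdedBlocks_subset, sum_const,
            smul_eq_mul, mul_comm #(crowdedBlocks G k d 𝓑)]
      _ ≤ _ := by
          gcongr
          exact inter_subset_right
  have hsum : (#(crowdedBlocks G k d 𝓑) : ℝ) * k ≤
      4 * #(rich G k d 𝓑) + 4 * #(crowdedBlocks G k d 𝓑) := mod_cast hsum
  have hrich := h.card_rich_le hG
  nlinarith [hG.hundred_le_cast, (#(crowdedBlocks G k d 𝓑)).cast_nonneg (α := ℝ)]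

/-- The covered vertices that have large degree or lie in a crowded block. -/
def obstructed (G : SimpleGraph V) (k : ℕ) (d : ℝ) (𝓑 : Finset (Finset V)) : Finset V :=
  covered 𝓑 ∩ bigVertices G k d ∪ covered (crowdedBlocks G k d 𝓑)

theorem IsOptimalPacking.card_obstructed_le (h : IsOptimalPacking G k d 𝓑)
    (hG : IsCritical G k d) : (#(obstructed G k d 𝓑) : ℝ) ≤ 3.12 * #𝓑 := by
  have hbig : (#(covered 𝓑 ∩ bigVertices G k d) : ℝ) ≤ #𝓑 + #(rich G k d 𝓑) := by
    exact_mod_cast ((card_le_card hG.covered_inter_bigVertices_subset).trans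
      (card_union_le _ _)).trans (Nat.add_le_add_right (h.card_contacts_sdiff_heavy_le hG) _)
  have hcrowded : (#(covered (crowdedBlocks G k d 𝓑)) : ℝ) ≤ 1.71 * #𝓑 := by
    rw [(h.toIsPacking.subset crowdedBlocks_subset).card_covered, Nat.cast_mul]
    exact h.mul_card_crowdedBlocks_le hG
  have hunion : (#(obstructed G k d 𝓑) : ℝ) ≤
      #(covered 𝓑 ∩ bigVertices G k d) + #(covered (crowdedBlocks G k d 𝓑)) :=
    mod_cast card_union_le _ _
  linarith [h.card_rich_le hG]

end Counting

section Swap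

variable {V : Type*} [Fintype V] {G : SimpleGraph V} {k : ℕ} {d : ℝ}
  {big B : Finset V} {𝓑 : Finset (Finset V)}

omit [Fintype V] in
theorem IsClump.exists_insert_erase (hB : IsClump G big B) (hcard : 2 * #(B ∩ big) + 2 < #B)
    {a z : V} (ha : a ∈ big) (hzB : z ∈ B) (hz : z ∉ big) (hza : G.Adj z a) :
    ∃ y ∈ B, y ∉ big ∧ IsClump G big (insert a (B.erase y)) := by
  obtain ⟨c, hc, hclump⟩ := hB
  have hparent : ∀ v ∈ B, ∃ w ∈ B, v = c ∨ G.Adj c v ∨ v ∈ big ∧ G.Adj c w ∧ G.Adj w v := by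
    intro v hv
    obtain hvc | hcv | ⟨hv, w, hw, hcw, hwv⟩ := hclump v hv
    · exact ⟨c, hc, .inl hvc⟩
    · exact ⟨c, hc, .inr (.inl hcv)⟩
    · exact ⟨w, hw, .inr (.inr ⟨hv, hcw, hwv⟩)⟩
  choose! parent hparentB hparent using hparent
  obtain ⟨y, hyB, hy⟩ : ∃ y ∈ B, y ∉ {c, z} ∪ (B ∩ big ∪ (B ∩ big).image parent) := by
    refine exists_mem_notMem_of_card_lt_card (lt_of_le_of_lt ?_ hcard)
    have := card_union_le {c, z} (B ∩ big ∪ (B ∩ big).image parent)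
    have := card_union_le (B ∩ big) ((B ∩ big).image parent)
    have := card_image_le (s := B ∩ big) (f := parent)
    have := card_le_two (a := c) (b := z)
    omega
  simp only [mem_union, mem_insert, mem_singleton, mem_inter, mem_image, not_or, not_exists,
    not_and] at hy
  obtain ⟨⟨hyc, hyz⟩, hybig, hyparent⟩ := hy
  have hmem {v} (hv : v ∈ B) (hvy : y ≠ v) : v ∈ insert a (B.erase y) :=
    mem_insert_of_mem (mem_erase.2 ⟨hvy.symm, hv⟩)
  refine ⟨y, hyB, hybig hyB, c, hmem hc hyc, fun v hv ↦ ?_⟩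
  obtain rfl | hv := mem_insert.1 hv
  · obtain rfl | hcz | ⟨hzbig, -⟩ := hparent z hzB
    · exact .inr (.inl hza)
    · exact .inr (.inr ⟨ha, z, hmem hzB hyz, hcz, hza⟩)
    · exact absurd hzbig hz
  · have hvB := mem_of_mem_erase hv
    obtain hvc | hcv | ⟨hvbig, hcw, hwv⟩ := hparent v hvB
    · exact .inl hvc
    · exact .inr (.inl hcv)
    · exact .inr (.inr ⟨hvbig, parent v,
        hmem (hparentB v hvB) fun h ↦ hyparent v ⟨hvB, hvbig⟩ h.symm, hcw, hwv⟩)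

theorem ncard_edgeSet_map_cell_le_swap {a : V} {S : Finset V}
    (h : (𝓑 : Set (Finset V)).PairwiseDisjoint id) (hB : B ∈ 𝓑) (ha : a ∉ covered 𝓑)
    (hSB : S ⊆ B) :
    (G.map (cell 𝓑)).edgeSet.ncard ≤
      (G.map (cell (insert (insert a S) (𝓑.erase B)))).edgeSet.ncard +
        #(G.interedges B (saturate 𝓑 (G.neighborFinset a))) + 1 := by
  have hrefine : (G.map (cell 𝓑)).edgeSet.ncard ≤
      (G.map (cell (insert S (𝓑.erase B)))).edgeSet.ncard := by
    refine ncard_edgeSet_map_cell_le G h fun T hT u hu v hv ↦ ?_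
    obtain rfl | hT := mem_insert.1 hT
    · exact mem_cell.2 (.inr ⟨B, hB, hSB hu, hSB hv⟩)
    · exact mem_cell.2 (.inr ⟨T, mem_of_mem_erase hT, hu, hv⟩)
  set P := (G.interedges B (saturate 𝓑 (G.neighborFinset a))).image Prod.snd
  have hsub := erase_subset B 𝓑
  have hcov : covered (𝓑.erase B) ⊆ covered 𝓑 := biUnion_subset_biUnion_of_subset_left id hsub
  have hmerge := ncard_edgeSet_map_cell_le_insert G (P := P) (h.subset (coe_subset.2 hsub))
    (disjoint_left.2 fun v hv ↦ notMem_covered_erase h hB (hSB hv)) (fun h ↦ ha (hcov h))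
    (fun h ↦ ha (subset_covered hB (hSB h))) fun y hy u w hau hyw huw ↦ .inr ?_
  · have : #P ≤ _ := card_image_le
    omega
  · refine mem_image.2 ⟨(y, w), G.mk_mem_interedges_iff.2 ⟨hSB hy, ?_, hyw⟩, rfl⟩
    refine mem_biUnion.2 ⟨u, (G.mem_neighborFinset a u).2 hau, mem_cell.2 ?_⟩
    obtain rfl | ⟨T, hT, huT, hwT⟩ := mem_cell.1 huw
    · exact .inl rfl
    · exact .inr ⟨T, mem_of_mem_erase hT, hwT, huT⟩

/-- Exchanging a vertex outside `bigVertices` for one in `bigVertices` gains `d / k`. -/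
theorem IsOptimalPacking.div_le_of_swap (h : IsOptimalPacking G k d 𝓑) (hB : B ∈ 𝓑) {a y : V}
    (ha : a ∉ covered 𝓑) (habig : a ∈ bigVertices G k d) (hyB : y ∈ B)
    (hy : y ∉ bigVertices G k d) (hclump : IsClump G (bigVertices G k d) (insert a (B.erase y))) :
    d / k ≤ #(G.interedges B (saturate 𝓑 (G.neighborFinset a))) + 1 := by
  have haB : a ∉ B.erase y := fun h ↦ ha (subset_covered hB (mem_of_mem_erase h))
  have haerase : a ∉ covered (𝓑.erase B) :=
    fun h ↦ ha (biUnion_subset_biUnion_of_subset_left id (erase_subset B 𝓑) h)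
  have hdisj : Disjoint (insert a (B.erase y)) (covered (𝓑.erase B)) :=
    disjoint_insert_left.2 ⟨haerase, disjoint_left.2 fun v hv ↦
      notMem_covered_erase h.pairwiseDisjoint hB (mem_of_mem_erase hv)⟩
  have hmax := h.potential_le _ ((h.toIsPacking.subset (erase_subset B 𝓑)).insert hclump
    (by rw [card_insert_of_notMem haB, card_erase_add_one hyB, h.card_eq B hB]) hdisj)
  have hloss := ncard_edgeSet_map_cell_le_swap (G := G) h.pairwiseDisjoint hB ha (erase_subset y B)
  have hblocks : #(insert (insert a (B.erase y)) (𝓑.erase B)) = #𝓑 := by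
    rw [card_insert_of_notMem (hclump.notMem_of_disjoint_covered hdisj), card_erase_add_one hB]
  have hbig : covered (insert (insert a (B.erase y)) (𝓑.erase B)) ∩ bigVertices G k d =
      insert a (covered 𝓑 ∩ bigVertices G k d) := by
    have hcov : covered 𝓑 = B ∪ covered (𝓑.erase B) := by rw [← covered_insert, insert_erase hB]
    rw [covered_insert, hcov, insert_union, insert_inter_of_mem habig, union_inter_distrib_right,
      union_inter_distrib_right, erase_inter, erase_eq_of_notMem fun h ↦ hy (mem_inter.1 h).2]
  rw [potential, potential, hblocks, hbig,
    card_insert_of_notMem fun h ↦ ha (mem_inter.1 h).1] at hmax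
  have hloss : ((G.map (cell 𝓑)).edgeSet.ncard : ℝ) ≤
      (G.map (cell (insert (insert a (B.erase y)) (𝓑.erase B)))).edgeSet.ncard +
        #(G.interedges B (saturate 𝓑 (G.neighborFinset a))) + 1 := mod_cast hloss
  push_cast at hmax
  linarith

theorem IsOptimalPacking.card_saturate_le (h : IsOptimalPacking G k d 𝓑) (hG : IsCritical G k d)
    {a : V} (hcore : a ∈ core G k d 𝓑) (ha : a ∉ covered 𝓑) (hlight : a ∉ heavy G k d 𝓑) :
    (#(saturate 𝓑 (G.neighborFinset a)) : ℝ) ≤ 0.51 * k ^ 3 * d := by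
  have hd := hG.pos
  have hk := hG.hundred_le_cast
  have hlight := degIn_core_lt_of_notMem_heavy hcore hlight
  have hresidual := h.degIn_residual_lt_of_notMem_covered hG hcore ha hlight
  have hinter : saturate 𝓑 (G.neighborFinset a) ∩ residual G k d 𝓑 ⊆
      {u ∈ residual G k d 𝓑 | G.Adj a u} := by
    intro u hu
    obtain ⟨hu, hures⟩ := mem_inter.1 hu
    obtain ⟨w, hw, huw⟩ := mem_biUnion.1 hu
    obtain rfl | ⟨B, hB, huB, -⟩ := mem_cell.1 huw
    · exact mem_filter.2 ⟨hures, (G.mem_neighborFinset a u).1 hw⟩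
    · exact absurd (subset_covered hB huB) (disjoint_left.1 disjoint_residual_covered hures)
  have hsat : (#(saturate 𝓑 (G.neighborFinset a)) : ℝ) ≤
      k * degIn G a (core G k d 𝓑) + degIn G a (residual G k d 𝓑) := by
    rw [← card_sdiff_add_card_inter _ (residual G k d 𝓑)]
    exact_mod_cast add_le_add (card_saturate_sdiff_residual_le h.toIsPacking
      (by linarith [hG.hundred_le]) a) (card_le_card hinter)
  calc (#(saturate 𝓑 (G.neighborFinset a)) : ℝ) ≤ k * (k ^ 2 * d / 2) + 4 * d / k :=
        hsat.trans (by gcongr)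
    _ ≤ k * (k ^ 2 * d / 2) + 0.01 * k ^ 3 * d := by
        gcongr
        rw [div_le_iff₀ (by linarith)]
        have : (100 : ℝ) ^ 4 ≤ k ^ 4 := by gcongr
        nlinarith
    _ = 0.51 * k ^ 3 * d := by ring

theorem IsPacking.exists_block_card_interedges_le (h : IsPacking G big k 𝓑)
    (hG : IsLocallySparse G k d) {a : V} {U : Finset V} (hU : U.Nonempty) (hUcov : U ⊆ covered 𝓑)
    (hUa : ∀ z ∈ U, G.Adj a z)
    (hsat : (#(saturate 𝓑 (G.neighborFinset a)) : ℝ) ≤ 12 * k ^ 3 * d) :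
    ∃ B ∈ 𝓑, ∃ z ∈ B, z ∈ U ∧ #U * (#(G.interedges B (saturate 𝓑 (G.neighborFinset a))) : ℝ) ≤
      k * (#(saturate 𝓑 (G.neighborFinset a)) * (d / (12 * k ^ 5))) := by
  set W := saturate 𝓑 (G.neighborFinset a)
  set 𝓖 : Finset (Finset V) := {B ∈ 𝓑 | ∃ z ∈ B, z ∈ U}
  have h𝓖 : IsPacking G big k 𝓖 := h.subset (filter_subset _ _)
  have hU𝓖 : U ⊆ covered 𝓖 := by
    intro z hz
    obtain ⟨B, hB, hzB⟩ := mem_covered.1 (hUcov hz)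
    exact subset_covered (mem_filter.2 ⟨hB, z, hzB, hz⟩) hzB
  have h𝓖W : covered 𝓖 ⊆ W := by
    intro v hv
    obtain ⟨B, hB, hvB⟩ := mem_covered.1 hv
    obtain ⟨hB, z, hzB, hz⟩ := mem_filter.1 hB
    exact mem_biUnion.2 ⟨z, (G.mem_neighborFinset a z).2 (hUa z hz),
      mem_cell.2 (.inr ⟨B, hB, hvB, hzB⟩)⟩
  have hsum : ∑ B ∈ 𝓖, (#(G.interedges B W) : ℝ) ≤ #W * (d / (12 * k ^ 5)) := by
    refine le_trans ?_ (hG W hsat)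
    simp_rw [card_interedges_eq_sum_degIn]
    exact_mod_cast (sum_biUnion h𝓖.pairwiseDisjoint).symm.le.trans
      (sum_le_sum_of_subset (f := fun v ↦ degIn G v W) h𝓖W)
  have h𝓖ne : 𝓖.Nonempty := by
    obtain ⟨z, hz⟩ := hU
    obtain ⟨B, hB, -⟩ := mem_covered.1 (hU𝓖 hz)
    exact ⟨B, hB⟩
  obtain ⟨B, hB, hle⟩ := exists_le_of_sum_le (s := 𝓖)
    (f := fun B ↦ #𝓖 * (#(G.interedges B W) : ℝ)) (g := fun _ ↦ #W * (d / (12 * k ^ 5))) h𝓖ne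
    (by rw [← mul_sum, sum_const, nsmul_eq_mul]; gcongr)
  obtain ⟨hB𝓑, z, hzB, hzU⟩ := mem_filter.1 hB
  refine ⟨B, hB𝓑, z, hzB, hzU, ?_⟩
  have hcard : (#U : ℝ) ≤ k * #𝓖 := by exact_mod_cast h𝓖.card_covered ▸ card_le_card hU𝓖
  calc #U * (#(G.interedges B W) : ℝ) ≤ k * #𝓖 * #(G.interedges B W) := by gcongr
    _ = k * (#𝓖 * #(G.interedges B W)) := mul_assoc ..
    _ ≤ _ := by gcongr

theorem IsOptimalPacking.exists_mem_uncrowded_block (h : IsOptimalPacking G k d 𝓑)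
    (hG : IsCritical G k d) {a : V} (hcore : a ∈ core G k d 𝓑) (ha : a ∉ covered 𝓑)
    (hlight : a ∉ heavy G k d 𝓑) (hobs : degIn G a (obstructed G k d 𝓑) < 5 * k * d) :
    ∃ B ∈ 𝓑, B ∉ crowdedBlocks G k d 𝓑 ∧ ∃ z ∈ B, z ∉ bigVertices G k d ∧ G.Adj a z ∧
      #(G.interedges B (saturate 𝓑 (G.neighborFinset a))) + 1 < d / k := by
  have hd := hG.pos
  have hk := hG.hundred_le_cast
  have hdeg := h.le_degIn_covered hG hcore ha (degIn_core_lt_of_notMem_heavy hcore hlight)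
  have hsat := h.card_saturate_le hG hcore ha hlight
  set U : Finset V := {z ∈ covered 𝓑 \ obstructed G k d 𝓑 | G.Adj a z}
  have hU : 5 * k * d ≤ (#U : ℝ) := by
    have hsplit : (degIn G a (covered 𝓑) : ℝ) ≤ #U + degIn G a (obstructed G k d 𝓑) := by
      have := degIn_union_le G a (covered 𝓑 \ obstructed G k d 𝓑) (obstructed G k d 𝓑)
      rw [sdiff_union_self_eq_union] at this
      exact_mod_cast (degIn_mono G a subset_union_left).trans this
    linarith
  have hU0 : (0 : ℝ) < #U := lt_of_lt_of_le (by positivity) hU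
  obtain ⟨B, hB, z, hzB, hzU, hle⟩ := h.toIsPacking.exists_block_card_interedges_le (U := U)
    hG.isLocallySparse (card_pos.1 (Nat.cast_pos.1 hU0)) ((filter_subset _ _).trans sdiff_subset)
    (fun z hz ↦ (mem_filter.1 hz).2) (hsat.trans (by gcongr; norm_num))
  obtain ⟨hz, haz⟩ := mem_filter.1 hzU
  rw [mem_sdiff, obstructed, mem_union, mem_inter, not_or, not_and] at hz
  refine ⟨B, hB, fun hcrowded ↦ hz.2.2 (subset_covered hcrowded hzB), z, hzB, hz.2.1 hz.1, haz, ?_⟩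
  set I := (#(G.interedges B (saturate 𝓑 (G.neighborFinset a))) : ℝ)
  have hI : 5 * k * d * I ≤ 5 * k * d * (0.01 * (d / k)) :=
    calc 5 * k * d * I ≤ #U * I := by gcongr
      _ ≤ k * (0.51 * k ^ 3 * d * (d / (12 * k ^ 5))) := hle.trans (by gcongr)
      _ = 0.0425 * d * (d / k) := by field_simp; norm_num
      _ ≤ 0.05 * k * d * (d / k) := by gcongr; linarith
      _ = 5 * k * d * (0.01 * (d / k)) := by ring
  have hI := le_of_mul_le_mul_left hI (by positivity)
  linarith [hG.le_div]

theorem IsOptimalPacking.le_degIn_obstructed (h : IsOptimalPacking G k d 𝓑)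
    (hG : IsCritical G k d) {a : V} (hcore : a ∈ core G k d 𝓑) (ha : a ∉ covered 𝓑)
    (hlight : a ∉ heavy G k d 𝓑) : 5 * k * d ≤ degIn G a (obstructed G k d 𝓑) := by
  by_contra! hobs
  obtain ⟨B, hB, hcrowded, z, hzB, hz, haz, hlt⟩ :=
    h.exists_mem_uncrowded_block hG hcore ha hlight hobs
  have habig : a ∈ bigVertices G k d := mem_filter.2 ⟨mem_univ a,
    (h.le_degIn_covered hG hcore ha (degIn_core_lt_of_notMem_heavy hcore hlight)).trans
      (mod_cast degIn_mono G a (subset_univ _))⟩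
  have hcard : 2 * #(B ∩ bigVertices G k d) + 2 < #B := by
    have : ¬ k < 4 * #(B ∩ bigVertices G k d) := fun h ↦ hcrowded (mem_filter.2 ⟨hB, h⟩)
    have := hG.hundred_le
    rw [h.card_eq B hB]
    omega
  obtain ⟨y, hyB, hy, hclump⟩ := (h.isClump B hB).exists_insert_erase hcard habig hzB hz haz.symm
  exact hlt.not_ge (h.div_le_of_swap hB ha habig hyB hy hclump)

theorem IsOptimalPacking.mul_card_core_sdiff_covered_le (h : IsOptimalPacking G k d 𝓑)
    (hG : IsCritical G k d) : k * (#(core G k d 𝓑 \ covered 𝓑) : ℝ) ≤ 10.56 * #𝓑 := by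
  set M := (core G k d 𝓑 \ covered 𝓑) \ heavy G k d 𝓑
  have hd := hG.pos
  have hk := hG.hundred_le_cast
  have hM := mul_card_le_of_le_degIn G (hG.card_interedges_le_four_mul (M ∪ obstructed G k d 𝓑))
    (t := 5 * k * d) fun a ha ↦ by
      obtain ⟨ha, hlight⟩ := mem_sdiff.1 ha
      obtain ⟨hcore, ha⟩ := mem_sdiff.1 ha
      exact h.le_degIn_obstructed hG hcore ha hlight
  have hunion : (#(M ∪ obstructed G k d 𝓑) : ℝ) ≤ #M + 3.12 * #𝓑 :=
    le_trans (mod_cast card_union_le _ _) (add_le_add_right (h.card_obstructed_le hG) _)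
  have hM : d * (5 * k * #M) ≤ d * (4 * (#M + 3.12 * #𝓑)) :=
    calc d * (5 * k * #M) = 5 * k * d * #M := by ring
      _ ≤ 4 * d * (#M + 3.12 * #𝓑) := hM.trans (by gcongr)
      _ = d * (4 * (#M + 3.12 * #𝓑)) := by ring
  have hM : k * (#M : ℝ) ≤ 2.52 * #𝓑 := by
    linarith [le_of_mul_le_mul_left hM hd, mul_le_mul_of_nonneg_right hk (#M).cast_nonneg]
  have hsplit : (#(core G k d 𝓑 \ covered 𝓑) : ℝ) ≤ #M + #(heavy G k d 𝓑) :=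
    mod_cast card_le_card_sdiff_add_card
  linarith [mul_le_mul_of_nonneg_left hsplit k.cast_nonneg, h.mul_card_heavy_le hG]

end Swap

section CoreMinor

variable {V : Type*} [Fintype V] {G : SimpleGraph V} {k : ℕ} {d : ℝ} {𝓑 : Finset (Finset V)}

theorem IsOptimalPacking.core_nonempty (h : IsOptimalPacking G k d 𝓑) (hG : IsCritical G k d) :
    (core G k d 𝓑).Nonempty := by
  by_contra hcore
  have hresidual : residual G k d 𝓑 = univ := by
    rwa [core, not_nonempty_iff_eq_empty, compl_eq_empty_iff] at hcore
  have := hG.nonempty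
  have hd := hG.pos
  have hk := hG.hundred_le_cast
  refine hG.le_card_interedges.not_gt ?_
  calc (#(G.interedges univ univ) : ℝ) = ∑ v, (degIn G v (residual G k d 𝓑) : ℝ) := by
        rw [card_interedges_eq_sum_degIn, Nat.cast_sum, hresidual]
    _ < ∑ _v : V, 4 * d / k := sum_lt_sum_of_nonempty univ_nonempty fun v _ ↦
        h.degIn_residual_lt hG (hresidual ▸ mem_univ v)
    _ = 4 * d / k * Fintype.card V := by rw [sum_const, nsmul_eq_mul, mul_comm, card_univ]
    _ ≤ 2 * d * Fintype.card V := by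
        gcongr
        rw [div_le_iff₀ (by linarith)]
        nlinarith

theorem IsOptimalPacking.ncard_edgeSet_le (h : IsOptimalPacking G k d 𝓑) (hG : IsCritical G k d) :
    (G.edgeSet.ncard : ℝ) ≤ (G.map (cell 𝓑)).edgeSet.ncard + 14 * d * #𝓑 := by
  have hd := hG.pos
  have hk := hG.hundred_le_cast
  have := hG.nonempty
  have hcell : (cell (∅ : Finset (Finset V))).Injective := fun u v huv ↦ by
    simpa [cell_of_notMem_covered, covered] using huv
  have hG_le : G.edgeSet.ncard ≤ (G.map (cell ∅)).edgeSet.ncard := by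
    simpa only [SimpleGraph.map_id] using
      ncard_edgeSet_map_le_of_factorsThrough G (hcell.factorsThrough id)
  have hmax := h.potential_le ∅ (isPacking_empty ..)
  have hbig : d / k * #(covered 𝓑 ∩ bigVertices G k d) ≤ d * #𝓑 :=
    calc d / k * #(covered 𝓑 ∩ bigVertices G k d) ≤ d / k * (k * #𝓑) := by
          gcongr
          exact_mod_cast h.card_covered ▸ card_le_card inter_subset_left
      _ = d * #𝓑 := by rw [← mul_assoc, div_mul_cancel₀ _ (by positivity)]
  have hG_le : (G.edgeSet.ncard : ℝ) ≤ (G.map (cell ∅)).edgeSet.ncard := mod_cast hG_le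
  rw [potential, potential, covered, biUnion_empty, empty_inter, card_empty, Nat.cast_zero,
    card_empty, Nat.cast_zero, mul_zero, mul_zero] at hmax
  linarith

theorem IsCritical.le_card_interedges_compl (hG : IsCritical G k d) (C : Finset V) :
    2 * d * #C ≤ 2 * #(G.interedges Cᶜ C) + #(G.interedges C C) := by
  obtain rfl | hC := C.eq_empty_or_nonempty
  · rw [card_empty, Nat.cast_zero, mul_zero]
    positivity
  have hsplit := card_interedges_union_self G (disjoint_compl_left (a := C))
  rw [union_comm, union_compl] at hsplit
  have hsplit : (#(G.interedges univ univ) : ℝ) = #(G.interedges Cᶜ Cᶜ) +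
    2 * #(G.interedges Cᶜ C) + #(G.interedges C C) := mod_cast hsplit
  have hcompl := hG.card_interedges_le Cᶜ (by rwa [Ne, compl_eq_univ_iff, ← Ne,
    ← nonempty_iff_ne_empty])
  have hcard : (#C : ℝ) + #Cᶜ = Fintype.card V := mod_cast card_add_card_compl C
  have hE := hG.le_card_interedges
  rw [← hcard, mul_add] at hE
  linarith

theorem IsOptimalPacking.le_card_interedges_core (h : IsOptimalPacking G k d 𝓑)
    (hG : IsCritical G k d) :
    2 * d * (k * #𝓑 - #(contacts G k d 𝓑) - 4 * #𝓑) ≤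
      #(G.interedges (core G k d 𝓑) (core G k d 𝓑)) := by
  set C := covered 𝓑 \ contacts G k d 𝓑
  set K := core G k d 𝓑
  have hd := hG.pos
  have hk := hG.hundred_le_cast
  have hCK : C ⊆ K := sdiff_subset.trans covered_subset_core
  have hcompl : Cᶜ = residual G k d 𝓑 ∪ K \ C := by
    have := sdiff_sup_sdiff_cancel (subset_univ K) hCK
    rwa [← compl_eq_univ_sdiff, ← compl_eq_univ_sdiff, sup_eq_union, eq_comm,
      show Kᶜ = residual G k d 𝓑 from compl_compl _] at this
  have hdisj : Disjoint (residual G k d 𝓑) (K \ C) :=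
    disjoint_compl_right.mono_right sdiff_subset
  have hCcard : (#C : ℝ) + #(contacts G k d 𝓑) = k * #𝓑 := by
    exact_mod_cast h.card_covered ▸ card_sdiff_add_card_eq_card (filter_subset _ _)
  have hres : (#(G.interedges (residual G k d 𝓑) C) : ℝ) ≤ 4 * d * #𝓑 :=
    calc (#(G.interedges (residual G k d 𝓑) C) : ℝ)
        = ∑ v ∈ C, (degIn G v (residual G k d 𝓑) : ℝ) := by
          rw [card_interedges_comm, card_interedges_eq_sum_degIn, Nat.cast_sum]
      _ ≤ ∑ _v ∈ C, 4 * d / k := sum_le_sum fun v hv ↦ by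
          obtain ⟨hv, hcontact⟩ := mem_sdiff.1 hv
          exact (not_le.1 fun hle ↦ hcontact (mem_filter.2 ⟨hv, hle⟩)).le
      _ = 4 * d / k * #C := by rw [sum_const, nsmul_eq_mul, mul_comm]
      _ ≤ 4 * d / k * (k * #𝓑) := by
          gcongr
          linarith [(#(contacts G k d 𝓑)).cast_nonneg (α := ℝ)]
      _ = 4 * d * #𝓑 := by field_simp
  have hK : 2 * (#(G.interedges (K \ C) C) : ℝ) + #(G.interedges C C) ≤ #(G.interedges K K) := by
    have := card_interedges_union_self G (sdiff_disjoint (s := C) (t := K))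
    rw [sdiff_union_of_subset hCK] at this
    exact_mod_cast (by omega)
  have hE := hG.le_card_interedges_compl C
  rw [hcompl, card_interedges_union_left G _ hdisj] at hE
  push_cast at hE
  linarith [mul_le_mul_of_nonneg_left hCcard.ge hd.le]

/-- The minor obtained from `G` by contracting the blocks of `𝓑` and then deleting the residual
vertices. Its vertices are the branch sets themselves. -/
def coreMinor (G : SimpleGraph V) (k : ℕ) (d : ℝ) (𝓑 : Finset (Finset V)) :
    SimpleGraph (cell 𝓑 '' core G k d 𝓑) :=
  (G.map (cell 𝓑)).induce _

theorem IsOptimalPacking.le_ncard_edgeSet_coreMinor (h : IsOptimalPacking G k d 𝓑)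
    (hG : IsCritical G k d) :
    d * (k * #𝓑 - #(contacts G k d 𝓑) - 18 * #𝓑) ≤ (coreMinor G k d 𝓑).edgeSet.ncard := by
  have hmap : ((G.map (cell 𝓑)).edgeSet.ncard : ℝ) +
      (G.induce (core G k d 𝓑 : Set V)).edgeSet.ncard ≤
      (coreMinor G k d 𝓑).edgeSet.ncard + G.edgeSet.ncard :=
    mod_cast ncard_edgeSet_map_add_le G (cell 𝓑) (core G k d 𝓑)
  have hcore : 2 * ((G.induce (core G k d 𝓑 : Set V)).edgeSet.ncard : ℝ) =
      #(G.interedges (core G k d 𝓑) (core G k d 𝓑)) := mod_cast two_mul_ncard_edgeSet_induce G _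
  linarith [h.ncard_edgeSet_le hG, h.le_card_interedges_core hG]

theorem IsOptimalPacking.ncard_image_cell_core_le (h : IsOptimalPacking G k d 𝓑) :
    (cell 𝓑 '' core G k d 𝓑).ncard ≤ #𝓑 + #(core G k d 𝓑 \ covered 𝓑) := by
  have hsub : cell 𝓑 '' core G k d 𝓑 ⊆ 𝓑 ∪ (core G k d 𝓑 \ covered 𝓑).image (cell 𝓑) := by
    rintro _ ⟨v, hv, rfl⟩
    by_cases hvC : v ∈ covered 𝓑
    · obtain ⟨S, hS, hvS⟩ := mem_covered.1 hvC
      rw [cell_of_mem h.pairwiseDisjoint hS hvS]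
      exact .inl hS
    · exact .inr (mem_image_of_mem _ (mem_sdiff.2 ⟨hv, hvC⟩))
  rw [← coe_union] at hsub
  have := Set.ncard_le_ncard hsub
  rw [Set.ncard_coe_finset] at this
  exact this.trans ((card_union_le _ _).trans (Nat.add_le_add_left card_image_le _))

theorem IsOptimalPacking.card_contacts_le (h : IsOptimalPacking G k d 𝓑) (hG : IsCritical G k d) :
    (#(contacts G k d 𝓑) : ℝ) ≤ 1.0804 * #𝓑 := by
  have hsplit : (#(contacts G k d 𝓑) : ℝ) ≤ #𝓑 + #(heavy G k d 𝓑) :=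
    mod_cast card_le_card_sdiff_add_card.trans
      (Nat.add_le_add_right (h.card_contacts_sdiff_heavy_le hG) _)
  linarith [h.mul_card_heavy_le hG,
    mul_le_mul_of_nonneg_right hG.hundred_le_cast (#(heavy G k d 𝓑)).cast_nonneg]

theorem IsOptimalPacking.mul_le_density_coreMinor (h : IsOptimalPacking G k d 𝓑)
    (hG : IsCritical G k d) : (k - 30) * d ≤ (coreMinor G k d 𝓑).density := by
  set n := ((cell 𝓑 '' core G k d 𝓑).ncard : ℝ)
  have hd := hG.pos
  have hk := hG.hundred_le_cast
  have hn : 0 < n := Nat.cast_pos.2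
    ((Set.ncard_pos (Set.toFinite _)).2 ((coe_nonempty.2 (h.core_nonempty hG)).image _))
  have hcard : k * n ≤ k * #𝓑 + 10.56 * #𝓑 :=
    calc k * n ≤ k * (#𝓑 + #(core G k d 𝓑 \ covered 𝓑)) := by
          gcongr
          rw [← Nat.cast_add]
          exact Nat.cast_le.2 h.ncard_image_cell_core_le
      _ ≤ k * #𝓑 + 10.56 * #𝓑 := by
          rw [mul_add]
          exact add_le_add_right (h.mul_card_core_sdiff_covered_le hG) _
  have hcount : (k - 30) * n ≤ k * #𝓑 - 19.0804 * #𝓑 := by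
    refine le_of_mul_le_mul_left (a := (k : ℝ)) ?_ (by linarith)
    nlinarith [mul_le_mul_of_nonneg_left hcard (by linarith : (0 : ℝ) ≤ k - 30),
      mul_nonneg k.cast_nonneg (#𝓑).cast_nonneg (α := ℝ), (#𝓑).cast_nonneg (α := ℝ)]
  rw [SimpleGraph.density, Nat.card_coe_set_eq, Nat.card_coe_set_eq, le_div_iff₀ hn]
  calc (k - 30) * d * n = d * ((k - 30) * n) := by ring
    _ ≤ d * (k * #𝓑 - #(contacts G k d 𝓑) - 18 * #𝓑) := by
        gcongr
        linarith [h.card_contacts_le hG]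
    _ ≤ (coreMinor G k d 𝓑).edgeSet.ncard := h.le_ncard_edgeSet_coreMinor hG

omit [Fintype V] in
theorem IsClump.connected_induce {big S : Finset V} (h : IsClump G big S) :
    (G.induce (S : Set V)).Connected := by
  obtain ⟨c, hc, hS⟩ := h
  rw [SimpleGraph.connected_iff_exists_forall_reachable]
  refine ⟨⟨c, hc⟩, fun ⟨v, hv⟩ ↦ ?_⟩
  have hreach {u w : V} (hu : u ∈ S) (hw : w ∈ S) (huw : G.Adj u w) :
      (G.induce (S : Set V)).Reachable ⟨u, hu⟩ ⟨w, hw⟩ :=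
    SimpleGraph.Adj.reachable (SimpleGraph.induce_adj.2 huw)
  obtain rfl | hcv | ⟨-, w, hw, hcw, hwv⟩ := hS v hv
  · rfl
  · exact hreach hc hv hcv
  · exact (hreach hc hw hcw).trans (hreach hw hv hwv)

theorem IsPacking.connected_induce_cell {big : Finset V} (h : IsPacking G big k 𝓑) (v : V) :
    (G.induce (cell 𝓑 v : Set V)).Connected := by
  by_cases hv : v ∈ covered 𝓑
  · obtain ⟨S, hS, hvS⟩ := mem_covered.1 hv
    rw [cell_of_mem h.pairwiseDisjoint hS hvS]
    exact (h.isClump S hS).connected_induce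
  · rw [cell_of_notMem_covered hv, coe_singleton]
    exact .of_subsingleton

theorem IsOptimalPacking.hasBoundedMinor_coreMinor (h : IsOptimalPacking G k d 𝓑) (hk : 1 ≤ k) :
    G.HasBoundedMinor k (coreMinor G k d 𝓑) := by
  refine ⟨fun L ↦ (L : Finset V), ⟨?_, ?_, ?_⟩, ?_⟩
  · rintro ⟨_, u, hu, rfl⟩ ⟨_, v, hv, rfl⟩ huv
    refine Set.disjoint_left.2 fun w hwu hwv ↦ huv (Subtype.ext ?_)
    exact (cell_eq_of_mem_cell h.pairwiseDisjoint hwu).symm.trans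
      (cell_eq_of_mem_cell h.pairwiseDisjoint hwv)
  · rintro ⟨_, v, -, rfl⟩
    exact h.connected_induce_cell v
  · rintro ⟨_, hL⟩ ⟨_, hL'⟩ hadj
    obtain ⟨-, u, v, huv, rfl, rfl⟩ := (SimpleGraph.map_adj' ..).1 hadj
    exact ⟨u, mem_cell_self 𝓑 u, v, mem_cell_self 𝓑 v, huv⟩
  · rintro ⟨_, v, -, rfl⟩
    rw [Nat.card_coe_set_eq, Set.ncard_coe_finset]
    exact h.card_cell_le hk v

end CoreMinor

theorem IsCritical.exists_hasBoundedMinor {V : Type u} [Fintype V] {G : SimpleGraph V} {k : ℕ}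
    {d : ℝ} (hG : IsCritical G k d) :
    ∃ (W : Type u) (_ : Finite W) (G' : SimpleGraph W),
      G.HasBoundedMinor k G' ∧ (k - 30) * d ≤ G'.density := by
  obtain ⟨𝓑, h⟩ := exists_isOptimalPacking G k d
  exact ⟨_, (Set.toFinite _).to_subtype, coreMinor G k d 𝓑,
    h.hasBoundedMinor_coreMinor ((by decide : 1 ≤ 100).trans hG.hundred_le),
    h.mul_le_density_coreMinor hG⟩

section Reduction

variable {V : Type*} {G : SimpleGraph V} {k : ℕ} {d : ℝ}

theorem hasBoundedMinor_of_copy {U W : Type*} {H : SimpleGraph U} {G' : SimpleGraph W}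
    (f : H.Copy G) (h : H.HasBoundedMinor k G') : G.HasBoundedMinor k G' := by
  obtain ⟨X, ⟨hdisj, hconn, hadj⟩, hcard⟩ := h
  refine ⟨fun i ↦ f '' X i, ⟨fun i j hij ↦ (Set.disjoint_image_iff f.injective).2 (hdisj hij),
    fun i ↦ ?_, fun i j hij ↦ ?_⟩, fun i ↦ ?_⟩
  · exact (hconn i).map (SimpleGraph.induceHom f.toHom (Set.mapsTo_image f (X i)))
      (Set.surjective_mapsTo_image_restrict f (X i))
  · obtain ⟨u, hu, v, hv, huv⟩ := hadj i j hij
    exact ⟨f u, ⟨u, hu, rfl⟩, f v, ⟨v, hv, rfl⟩, f.toHom.map_adj huv⟩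
  · exact (Nat.card_image_of_injective f.injective (X i)).trans_le (hcard i)

theorem ncard_edgeSet_induce_top (U : Set V) :
    ((⊤ : G.Subgraph).induce U).edgeSet.ncard = (G.induce U).edgeSet.ncard := by
  rw [SimpleGraph.induce_eq_coe_induce_top, ← SimpleGraph.Subgraph.image_coe_edgeSet_coe,
    Set.ncard_image_of_injective _ (Sym2.map.injective Subtype.val_injective)]
  rfl

theorem isLocallySparse_of_forall_subgraph
    (h : ∀ H : G.Subgraph, (Nat.card H.verts : ℝ) ≤ 12 * k ^ 3 * d → H.density < d / (24 * k ^ 5)) :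
    IsLocallySparse G k d := by
  intro U hU
  obtain rfl | hUne := U.eq_empty_or_nonempty
  · simp
  have hdensity := h ((⊤ : G.Subgraph).induce (U : Set V))
    (by rwa [SimpleGraph.Subgraph.induce_verts, Nat.card_coe_set_eq, Set.ncard_coe_finset])
  rw [SimpleGraph.Subgraph.density, SimpleGraph.Subgraph.induce_verts, Nat.card_coe_set_eq,
    Nat.card_coe_set_eq, Set.ncard_coe_finset, ncard_edgeSet_induce_top,
    div_lt_iff₀ (Nat.cast_pos.2 (card_pos.2 hUne))] at hdensity
  calc (#(G.interedges U U) : ℝ)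
      = 2 * (G.induce (U : Set V)).edgeSet.ncard := by
        exact_mod_cast (two_mul_ncard_edgeSet_induce G U).symm
    _ ≤ 2 * (d / (24 * k ^ 5) * #U) := by gcongr
    _ = #U * (d / (12 * k ^ 5)) := by ring

theorem density_mul_card [Finite V] [Nonempty V] : G.density * Nat.card V = G.edgeSet.ncard :=
  div_mul_cancel₀ _ (Nat.cast_ne_zero.2 Nat.card_pos.ne')

theorem nonempty_of_density_pos (h : 0 < G.density) : Nonempty V := by
  by_contra! hV
  simp [SimpleGraph.density] at h

theorem exists_isCritical_induce [Finite V] (hk : 100 ≤ k) (hd : k ^ 2 ≤ d)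
    (hG : IsLocallySparse G k d) (hdG : d ≤ G.density) :
    ∃ S : Finset V, IsCritical (G.induce (S : Set V)) k d := by
  have := Fintype.ofFinite V
  have : 0 < d := (by positivity : (0 : ℝ) < k ^ 2).trans_le hd
  have := nonempty_of_density_pos (this.trans_le hdG)
  have hE : 2 * d * #(univ : Finset V) ≤ #(G.interedges univ univ) :=
    calc 2 * d * #(univ : Finset V) ≤ 2 * (G.density * Nat.card V) := by
          rw [card_univ, Nat.card_eq_fintype_card, mul_assoc]
          gcongr
      _ = #(G.interedges univ univ) := by
          rw [density_mul_card]
          exact_mod_cast two_mul_ncard_edgeSet G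
  obtain ⟨S, hS, hmin⟩ := exists_min_image
    {S : Finset V | S.Nonempty ∧ 2 * d * #S ≤ #(G.interedges S S)} card
    ⟨univ, mem_filter.2 ⟨mem_univ _, univ_nonempty, hE⟩⟩
  obtain ⟨-, hSne, hSE⟩ := mem_filter.1 hS
  set f := Embedding.induce (G := G) (S : Set V)
  have hf := fun U ↦ card_interedges_map_embedding G f U U
  have huniv : (univ : Finset (S : Set V)).map f.toEmbedding = S := by
    ext
    simp [f]
  have hcard : #S = #(univ : Finset (S : Set V)) := by rw [← card_map f.toEmbedding, huniv]
  refine ⟨S, hk, hd, fun U hU ↦ ?_, hSne.to_subtype, ?_, fun U hU ↦ ?_⟩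
  · have := hG (U.map f.toEmbedding) (by rwa [card_map])
    rwa [hf, card_map] at this
  · rwa [← hf, huniv, ← card_univ, ← hcard]
  · by_contra! hlt
    have hUne : U.Nonempty := by
      rw [nonempty_iff_ne_empty]
      rintro rfl
      simp at hlt
    rw [← hf, ← card_map f.toEmbedding] at hlt
    have := hmin _ (mem_filter.2 ⟨mem_univ _, hUne.map, hlt.le⟩)
    rw [hcard, card_map] at this
    exact hU ((card_eq_iff_eq_univ U).1 (le_antisymm (card_le_univ U) this))

end Reduction

end

end BoundedMinor

open BoundedMinor in
theorem dense_subgraph_or_bounded_minor_general (k : ℕ) (hk : 100 ≤ k)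
    (V : Type u) [Finite V] (G : SimpleGraph V) (hd : (k : ℝ) ^ 2 ≤ G.density) :
    (∃ H : G.Subgraph, (Nat.card H.verts : ℝ) ≤ 12 * k ^ 3 * G.density ∧
        G.density / (24 * k ^ 5) ≤ H.density) ∨
    (∃ (W : Type u) (_ : Finite W) (G' : SimpleGraph W), G.HasBoundedMinor k G' ∧
      (k - 30) * G.density ≤ G'.density) := by
  refine or_iff_not_imp_left.2 fun h ↦ ?_
  push Not at h
  obtain ⟨S, hS⟩ := exists_isCritical_induce hk hd (isLocallySparse_of_forall_subgraph h) le_rfl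
  obtain ⟨W, hW, G', hminor, hdensity⟩ := hS.exists_hasBoundedMinor
  exact ⟨W, hW, G', hasBoundedMinor_of_copy (Embedding.induce (S : Set V)).toCopy hminor, hdensity⟩

/-- Let `k ≥ 100` be an integer and `G` a graph with density `d = d(G) ≥ k²`. Then `G`
contains (i) a subgraph `H` with `v(H) ≤ 12k³d` and `d(H) ≥ d/(24k⁵)`, or (ii) an
`m`-bounded minor `G'` with `d(G') ≥ m(1 − 30/m)d` for some integer `m ∈ [k/6, k]`. -/
theorem dense_subgraph_or_bounded_minor (k : ℕ) (hk : 100 ≤ k)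
    (V : Type) [Fintype V] (G : SimpleGraph V) (hd : (k : ℝ) ^ 2 ≤ G.density) :
    (∃ H : G.Subgraph, (Nat.card H.verts : ℝ) ≤ 12 * k ^ 3 * G.density ∧
        G.density / (24 * k ^ 5) ≤ H.density) ∨
    (∃ m : ℕ, (k : ℝ) / 6 ≤ (m : ℝ) ∧ m ≤ k ∧
        ∃ (W : Type) (_ : Finite W) (G' : SimpleGraph W), G.HasBoundedMinor m G' ∧
          (m : ℝ) * (1 - 30 / m) * G.density ≤ G'.density) := by
  have hk₀ : (k : ℝ) * (1 - 30 / k) = k - 30 := by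
    field_simp [(by positivity : (k : ℝ) ≠ 0)]
  refine (dense_subgraph_or_bounded_minor_general k hk V G hd).imp_right fun h ↦
    ⟨k, div_le_self k.cast_nonneg (by norm_num), le_rfl, ?_⟩
  rwa [hk₀]
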